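/- arXiv:2401.08489 — 2 statements merged into one kernel-verified Lean document; each statement's English description precedes it below -/
import Mathlib

section
/- Let μ be a dominant integral weight of 𝔤 with μ = μ̄, and suppose ⟨μ, α_j∨⟩ = 0 for every index j whose fundamental weight is self-dual (ϖ_j = ϖ̄_j). Then V_μ is orthogonal (in particular, not symplectic). -/
open scoped TensorProduct Classical
open LieAlgebra LieModule Module

namespace AdjPaper

variable {L : Type} [LieRing L] [LieAlgebra ℂ L]

/-- `χ` is a root of `L` relative to the Cartan subalgebra `H`: a nonzero linear functional
on `H` with nontrivial root space. -/
def IsRoot (H : LieSubalgebra ℂ L) [H.IsCartanSubalgebra] (χ : Module.Dual ℂ H) : Prop :=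
  χ ≠ 0 ∧ rootSpace H ⇑χ ≠ ⊥

/-- `t` is the coroot `χ∨` of the root `χ`: it lies in `⁅𝔤_χ, 𝔤_{-χ}⁆` and satisfies
`χ t = 2`. -/
def IsCoroot (H : LieSubalgebra ℂ L) [H.IsCartanSubalgebra] (χ : Module.Dual ℂ H) (t : H) : Prop :=
  χ t = 2 ∧ ∃ e ∈ rootSpace H ⇑χ, ∃ f ∈ rootSpace H ⇑(-χ), (t : L) = ⁅e, f⁆

/-- `α` enumerates the simple roots of a base of the root system of `(L, H)`. -/
structure IsBase (H : LieSubalgebra ℂ L) [H.IsCartanSubalgebra] {r : ℕ} (α : Fin r → Module.Dual ℂ H) : Prop where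
  isRoot : ∀ j, IsRoot H (α j)
  indep : LinearIndependent ℂ α
  pos_neg : ∀ χ : Module.Dual ℂ H, IsRoot H χ →
    (∃ c : Fin r → ℕ, χ = ∑ j, (c j : ℂ) • α j) ∨ (∃ c : Fin r → ℕ, χ = -∑ j, (c j : ℂ) • α j)

/-- `χ` is a positive root relative to the base `α`. -/
def IsPosRoot (H : LieSubalgebra ℂ L) [H.IsCartanSubalgebra] {r : ℕ} (α : Fin r → Module.Dual ℂ H)
    (χ : Module.Dual ℂ H) : Prop :=
  IsRoot H χ ∧ ∃ c : Fin r → ℕ, χ = ∑ j, (c j : ℂ) • α j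

/-- A weight `μ` is dominant integral: all its pairings `⟨μ, α_j∨⟩ = μ (hc j)` with the
simple coroots `hc j` are non-negative integers. -/
def IsDomInt {H : LieSubalgebra ℂ L} {r : ℕ} (hc : Fin r → H) (μ : Module.Dual ℂ H) : Prop :=
  ∀ j, ∃ n : ℕ, μ (hc j) = (n : ℂ)

/-- `V` is an irreducible `L`-module with highest weight `μ` (relative to the Cartan
subalgebra `H` and the base `α`): it is irreducible and possesses a nonzero vector of
`H`-weight `μ` annihilated by all positive root spaces. -/
def IsHWIrrep (H : LieSubalgebra ℂ L) [H.IsCartanSubalgebra] {r : ℕ} (α : Fin r → Module.Dual ℂ H)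
    (μ : Module.Dual ℂ H) (V : Type) [AddCommGroup V] [Module ℂ V]
    [LieRingModule L V] [LieModule ℂ L V] : Prop :=
  IsSimpleOrder (LieSubmodule ℂ L V) ∧
  ∃ v : V, v ≠ 0 ∧ (∀ x : H, ⁅(x : L), v⁆ = μ x • v) ∧
    ∀ χ : Module.Dual ℂ H, IsPosRoot H α χ → ∀ e ∈ rootSpace H ⇑χ, ⁅e, v⁆ = 0

/-- `W` is isomorphic to the dual representation `V*`: there is a nondegenerate
`𝔤`-invariant pairing `W × V → ℂ`. -/
def IsDualPair (W V : Type) [AddCommGroup W] [Module ℂ W] [LieRingModule L W]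
    [AddCommGroup V] [Module ℂ V] [LieRingModule L V] : Prop :=
  ∃ B : W →ₗ[ℂ] V →ₗ[ℂ] ℂ,
    (∀ w, (∀ v, B w v = 0) → w = 0) ∧ (∀ v, (∀ w, B w v = 0) → v = 0) ∧
    ∀ (x : L) (w : W) (v : V), B ⁅x, w⁆ v + B w ⁅x, v⁆ = 0

/-- `V` is an orthogonal representation: it has a nondegenerate invariant symmetric
bilinear form. -/
def IsOrthogonalRep (V : Type) [AddCommGroup V] [Module ℂ V] [LieRingModule L V] : Prop :=
  ∃ B : V →ₗ[ℂ] V →ₗ[ℂ] ℂ,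
    (∀ v w, B v w = B w v) ∧ (∀ v, (∀ w, B v w = 0) → v = 0) ∧
    ∀ (x : L) (v w : V), B ⁅x, v⁆ w + B v ⁅x, w⁆ = 0

/-- `V` is a symplectic representation: it has a nondegenerate invariant alternating
bilinear form. -/
def IsSymplecticRep (V : Type) [AddCommGroup V] [Module ℂ V] [LieRingModule L V] : Prop :=
  ∃ B : V →ₗ[ℂ] V →ₗ[ℂ] ℂ,
    (∀ v, B v v = 0) ∧ (∀ v, (∀ w, B v w = 0) → v = 0) ∧
    ∀ (x : L) (v w : V), B ⁅x, v⁆ w + B v ⁅x, w⁆ = 0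

variable (L) in
/-- The operator on `adj(𝔤) ⊗ V ⊗ V` exchanging the two copies of `V`. -/
noncomputable def swapMap (V : Type) [AddCommGroup V] [Module ℂ V] :
    (L ⊗[ℂ] (V ⊗[ℂ] V)) →ₗ[ℂ] (L ⊗[ℂ] (V ⊗[ℂ] V)) :=
  LinearMap.lTensor L (TensorProduct.comm ℂ V V).toLinearMap

variable (L) in
/-- The `𝔤`-invariant subspace of `adj(𝔤) ⊗ S²V`, realised inside `adj(𝔤) ⊗ V ⊗ V` as the
invariant vectors fixed by the swap of the two copies of `V`. -/
noncomputable def symSquareInvariants (V : Type) [AddCommGroup V] [Module ℂ V]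
    [LieRingModule L V] [LieModule ℂ L V] : Submodule ℂ (L ⊗[ℂ] (V ⊗[ℂ] V)) :=
  (maxTrivSubmodule ℂ L (L ⊗[ℂ] (V ⊗[ℂ] V)) : Submodule ℂ (L ⊗[ℂ] (V ⊗[ℂ] V))) ⊓
    LinearMap.ker (swapMap L V - LinearMap.id)

variable (L) in
/-- The `𝔤`-invariant subspace of `adj(𝔤) ⊗ Λ²V`, realised inside `adj(𝔤) ⊗ V ⊗ V` as the
invariant vectors anti-fixed by the swap of the two copies of `V`. -/
noncomputable def altSquareInvariants (V : Type) [AddCommGroup V] [Module ℂ V]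
    [LieRingModule L V] [LieModule ℂ L V] : Submodule ℂ (L ⊗[ℂ] (V ⊗[ℂ] V)) :=
  (maxTrivSubmodule ℂ L (L ⊗[ℂ] (V ⊗[ℂ] V)) : Submodule ℂ (L ⊗[ℂ] (V ⊗[ℂ] V))) ⊓
    LinearMap.ker (swapMap L V + LinearMap.id)


section Aux

/-- Abstract triangular-decomposition data with a principal `sl₂` triple. -/
structure Setup (H : LieSubalgebra ℂ L) (P N : Set L) (h e f : L) : Prop where
  trip : IsSl2Triple h e f
  hH : h ∈ H
  e_mem : e ∈ Submodule.span ℂ P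
  f_mem : f ∈ Submodule.span ℂ N
  top : Submodule.span ℂ P ⊔ H.toSubmodule ⊔ Submodule.span ℂ N = ⊤
  degP : ∀ y ∈ P, ∃ k : ℕ, ⁅h, y⁆ = (2 * ((k : ℂ) + 1)) • y
  degN : ∀ y ∈ N, ∃ k : ℕ, ⁅h, y⁆ = (-(2 * ((k : ℂ) + 1))) • y
  comm : ∀ x ∈ H, ⁅h, x⁆ = 0

lemma Setup.symm {H : LieSubalgebra ℂ L} {P N : Set L} {h e f : L} (S : Setup H P N h e f) :
    Setup H N P (-h) f e where
  trip := S.trip.symm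
  hH := H.neg_mem S.hH
  e_mem := S.f_mem
  f_mem := S.e_mem
  top := by rw [← S.top, sup_comm, sup_comm (Submodule.span ℂ N), sup_assoc, sup_comm (Submodule.span ℂ P)]
  degP y hy := by
    obtain ⟨k, hk⟩ := S.degN y hy
    exact ⟨k, by rw [neg_lie, hk, neg_smul, neg_neg]⟩
  degN y hy := by
    obtain ⟨k, hk⟩ := S.degP y hy
    exact ⟨k, by rw [neg_lie, hk, neg_smul]⟩
  comm x hx := by rw [neg_lie, S.comm x hx, neg_zero]

variable {V : Type} [AddCommGroup V] [Module ℂ V] [LieRingModule L V] [LieModule ℂ L V]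

/-- `v` is a highest weight vector of weight `μ`. -/
structure IsHW (H : LieSubalgebra ℂ L) (P : Set L) (μ : Module.Dual ℂ H) (v : V) : Prop where
  ne : v ≠ 0
  wt : ∀ x : H, ⁅(x : L), v⁆ = μ x • v
  ann : ∀ y ∈ P, ⁅y, v⁆ = 0

lemma ann_span {P : Set L} {v : V} (hP : ∀ y ∈ P, ⁅y, v⁆ = 0) {y : L}
    (hy : y ∈ Submodule.span ℂ P) : ⁅y, v⁆ = 0 := by
  induction hy using Submodule.span_induction with
  | mem x hx => exact hP x hx
  | zero => simp
  | add x y _ _ h1 h2 => rw [add_lie, h1, h2, add_zero]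
  | smul a x _ h1 => rw [smul_lie, h1, smul_zero]

lemma cyc {H : LieSubalgebra ℂ L} {P N : Set L} {h e f : L} (S : Setup H P N h e f)
    {μ : Module.Dual ℂ H} {v : V} (hv : IsHW H P μ v) (D : Submodule ℂ V) (hvD : v ∈ D)
    (hD : ∀ y ∈ N, ∀ w ∈ D, ⁅y, w⁆ ∈ D) : ∀ w ∈ LieSubmodule.lieSpan ℂ L {v}, w ∈ D := by
  let T : Submodule ℂ V := sInf {D | v ∈ D ∧ ∀ y ∈ N, ∀ w ∈ D, ⁅y, w⁆ ∈ D}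
  have hvT : v ∈ T := by
    rw [Submodule.mem_sInf]; exact fun D hD => hD.1
  have hTN : ∀ y ∈ N, ∀ w ∈ T, ⁅y, w⁆ ∈ T := by
    intro y hy w hw
    rw [Submodule.mem_sInf] at hw ⊢
    exact fun D hD => hD.2 y hy w (hw D hD)
  have hTN' : ∀ y ∈ Submodule.span ℂ N, ∀ w ∈ T, ⁅y, w⁆ ∈ T := by
    intro y hy w hw
    induction hy using Submodule.span_induction with
    | mem x hx => exact hTN x hx w hw
    | zero => simp
    | add x y _ _ h1 h2 => rw [add_lie]; exact T.add_mem h1 h2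
    | smul a x _ h1 => rw [smul_lie]; exact T.smul_mem _ h1
  let T' : Submodule ℂ V :=
    { carrier := {w | w ∈ T ∧ ∀ x : L, ⁅x, w⁆ ∈ T}
      add_mem' := fun {a b} ha hb => ⟨T.add_mem ha.1 hb.1, fun x => by
        rw [lie_add]; exact T.add_mem (ha.2 x) (hb.2 x)⟩
      zero_mem' := ⟨T.zero_mem, fun x => by simp⟩
      smul_mem' := fun c a ha => ⟨T.smul_mem c ha.1, fun x => by
        rw [lie_smul]; exact T.smul_mem c (ha.2 x)⟩ }
  have hTT' : T ≤ T' := by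
    refine sInf_le ⟨⟨hvT, fun x => ?_⟩, fun y hy w hw => ⟨hTN y hy w hw.1, fun x => ?_⟩⟩
    · have hx : x ∈ Submodule.span ℂ P ⊔ H.toSubmodule ⊔ Submodule.span ℂ N := by
        rw [S.top]; trivial
      obtain ⟨a, ha, c, hc, rfl⟩ := Submodule.mem_sup.1 hx
      obtain ⟨a, ha', b, hb, rfl⟩ := Submodule.mem_sup.1 ha
      rw [add_lie, add_lie, ann_span hv.ann ha', zero_add]
      refine T.add_mem ?_ (hTN' c hc v hvT)
      rw [hv.wt ⟨b, hb⟩]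
      exact T.smul_mem _ hvT
    · rw [leibniz_lie]
      exact T.add_mem (hw.2 _) (hTN y hy _ (hw.2 x))
  let TL : LieSubmodule ℂ L V := { T with lie_mem := fun {x m} hm => (hTT' hm).2 x }
  have h1 : LieSubmodule.lieSpan ℂ L {v} ≤ TL := by
    rw [LieSubmodule.lieSpan_le]
    exact Set.singleton_subset_iff.2 hvT
  intro w hw
  have h2 : w ∈ T := h1 hw
  rw [Submodule.mem_sInf] at h2
  exact h2 D ⟨hvD, hD⟩

/-- The sum of the `h`-eigenspaces strictly below `c`. -/
noncomputable def low (V : Type) [AddCommGroup V] [Module ℂ V] [LieRingModule L V]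
    [LieModule ℂ L V] (h : L) (c : ℂ) : Submodule ℂ V :=
  ⨆ k : ℕ, (toEnd ℂ L V h).eigenspace (c - 2 * ((k : ℂ) + 1))

lemma mem_low {h : L} {c : ℂ} {w : V} (k : ℕ) (hw : ⁅h, w⁆ = (c - 2 * ((k : ℂ) + 1)) • w) :
    w ∈ low V h c :=
  Submodule.mem_iSup_of_mem k (Module.End.mem_eigenspace_iff.2 hw)

lemma low_induction {h : L} {c : ℂ} (D : Submodule ℂ V)
    (hD : ∀ (k : ℕ) (w : V), ⁅h, w⁆ = (c - 2 * ((k : ℂ) + 1)) • w → w ∈ D) : low V h c ≤ D :=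
  iSup_le fun k w hw => hD k w (Module.End.mem_eigenspace_iff.1 hw)

lemma lie_deg {h y : L} {a b : ℂ} {w : V} (hy : ⁅h, y⁆ = a • y) (hw : ⁅h, w⁆ = b • w) :
    ⁅h, ⁅y, w⁆⁆ = (a + b) • ⁅y, w⁆ := by
  rw [leibniz_lie, hy, hw, smul_lie, lie_smul, add_smul]

lemma cyc_low {H : LieSubalgebra ℂ L} {P N : Set L} {h e f : L} (S : Setup H P N h e f)
    {μ : Module.Dual ℂ H} {v : V} (hv : IsHW H P μ v) {w : V}
    (hw : w ∈ LieSubmodule.lieSpan ℂ L {v}) :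
    w ∈ Submodule.span ℂ {v} ⊔ low V h (μ ⟨h, S.hH⟩) := by
  refine cyc S hv _ (Submodule.mem_sup_left (Submodule.mem_span_singleton_self v)) ?_ w hw
  intro y hy w hw
  obtain ⟨k, hk⟩ := S.degN y hy
  refine Submodule.mem_sup_right ?_
  obtain ⟨a, ha, b, hb, rfl⟩ := Submodule.mem_sup.1 hw
  rw [lie_add]
  refine Submodule.add_mem _ ?_ ?_
  · obtain ⟨t, rfl⟩ := Submodule.mem_span_singleton.1 ha
    rw [lie_smul]
    refine Submodule.smul_mem _ _ (mem_low k ?_)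
    rw [lie_deg hk (hv.wt ⟨h, S.hH⟩)]
    congr 1; ring
  · have : low V h (μ ⟨h, S.hH⟩) ≤ (low V h (μ ⟨h, S.hH⟩)).comap (toEnd ℂ L V y) := by
      refine low_induction _ fun l w hw => ?_
      refine mem_low (k + l + 1) ?_
      rw [toEnd_apply_apply, lie_deg hk hw]
      congr 1; push_cast; ring
    exact this hb

lemma low_disj {h : L} {c : ℂ} {w : V} (hw : w ∈ low V h c) {d : ℂ} (hwd : ⁅h, w⁆ = d • w)
    (hd : ∀ k : ℕ, c - 2 * ((k : ℂ) + 1) ≠ d) : w = 0 := by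
  have hi := (toEnd ℂ L V h).eigenspaces_iSupIndep d
  refine Submodule.disjoint_def.1 hi w (Module.End.mem_eigenspace_iff.2 hwd) ?_
  have : low V h c ≤ ⨆ j, ⨆ (_ : j ≠ d), (toEnd ℂ L V h).eigenspace j :=
    iSup_le fun k => le_iSup₂_of_le (c - 2 * ((k : ℂ) + 1)) (hd k) le_rfl
  exact this hw

lemma cyc_top {H : LieSubalgebra ℂ L} {P N : Set L} {h e f : L} (S : Setup H P N h e f)
    {μ : Module.Dual ℂ H} {v : V} (hv : IsHW H P μ v) {w : V}
    (hw : w ∈ LieSubmodule.lieSpan ℂ L {v}) (hwd : ⁅h, w⁆ = μ ⟨h, S.hH⟩ • w) :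
    ∃ a : ℂ, w = a • v := by
  obtain ⟨a, ha, b, hb, rfl⟩ := Submodule.mem_sup.1 (cyc_low S hv hw)
  obtain ⟨t, rfl⟩ := Submodule.mem_span_singleton.1 ha
  refine ⟨t, ?_⟩
  have : b = 0 := by
    refine low_disj hb (d := μ ⟨h, S.hH⟩) ?_ ?_
    · rw [lie_add, lie_smul, hv.wt ⟨h, S.hH⟩, smul_add, smul_comm] at hwd
      exact add_left_cancel hwd
    · intro k hk
      have : (2 * ((k : ℂ) + 1)) = 0 := by linear_combination -hk
      norm_cast at this
  rw [this, add_zero]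

lemma cyc_above {H : LieSubalgebra ℂ L} {P N : Set L} {h e f : L} (S : Setup H P N h e f)
    {μ : Module.Dual ℂ H} {v : V} (hv : IsHW H P μ v) {w : V}
    (hw : w ∈ LieSubmodule.lieSpan ℂ L {v}) (k : ℕ)
    (hwd : ⁅h, w⁆ = (μ ⟨h, S.hH⟩ + 2 * ((k : ℂ) + 1)) • w) : w = 0 := by
  have h1 : w ∈ low V h (μ ⟨h, S.hH⟩ + 2) := by
    have h2 := cyc_low S hv hw
    refine (sup_le ?_ ?_ : _ ≤ low V h (μ ⟨h, S.hH⟩ + 2)) h2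
    · rw [Submodule.span_singleton_le_iff_mem]
      refine mem_low 0 ?_
      rw [hv.wt ⟨h, S.hH⟩]; congr 1; push_cast; ring
    · refine low_induction _ fun l w hw => mem_low (l + 1) ?_
      rw [hw]; congr 1; push_cast; ring
  refine low_disj h1 hwd ?_
  intro l hl
  have : ((l : ℂ) + k + 1) = 0 := by linear_combination -hl / 2
  norm_cast at this

lemma pow_mem (T : LieSubmodule ℂ L V) (y : L) (n : ℕ) {w : V} (hw : w ∈ T) :
    (toEnd ℂ L V y ^ n) w ∈ T := by
  induction n with
  | zero => simpa using hw
  | succ n ih => rw [pow_succ', Module.End.mul_apply]; exact T.lie_mem ih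

lemma HW_prim {H : LieSubalgebra ℂ L} {P N : Set L} {h e f : L} (S : Setup H P N h e f)
    {μ : Module.Dual ℂ H} {v : V} (hv : IsHW H P μ v) :
    S.trip.HasPrimitiveVectorWith v (μ ⟨h, S.hH⟩) :=
  ⟨hv.ne, hv.wt ⟨h, S.hH⟩, ann_span hv.ann S.e_mem⟩

lemma mem_gen (v : V) : v ∈ LieSubmodule.lieSpan ℂ L {v} :=
  LieSubmodule.subset_lieSpan (Set.mem_singleton v)

section FD
variable [FiniteDimensional ℂ V]

lemma cyc_below {H : LieSubalgebra ℂ L} {P N : Set L} {h e f : L} (S : Setup H P N h e f)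
    {μ : Module.Dual ℂ H} {v : V} (hv : IsHW H P μ v) {n : ℕ} (hn : μ ⟨h, S.hH⟩ = n) {w : V}
    (hw : w ∈ LieSubmodule.lieSpan ℂ L {v}) (k : ℕ)
    (hwd : ⁅h, w⁆ = (-(n : ℂ) - 2 * ((k : ℂ) + 1)) • w) : w = 0 := by
  by_contra hw0
  have hS := S.symm.trip
  have hh : ∀ m : ℕ, ⁅-h, (toEnd ℂ L V f ^ m) w⁆ =
      ((n + 2 * (k + 1) + 2 * m : ℕ) : ℂ) • (toEnd ℂ L V f ^ m) w := by
    intro m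
    rw [hS.lie_h_pow_toEnd_e (R := ℂ) (μ := ((n + 2 * (k + 1) : ℕ) : ℂ))]
    · congr 1; push_cast; ring
    · rw [neg_lie, hwd, ← neg_smul]; congr 1; push_cast; ring
  have hex : ∃ m, (toEnd ℂ L V f ^ m) w = 0 := by
    by_contra! hne
    have hfin : {a | (toEnd ℂ L V (-h)).HasEigenvalue a}.Finite :=
      Module.End.finite_hasEigenvalue _
    refine Set.infinite_of_injective_forall_mem (f := fun m : ℕ =>
      ((n + 2 * (k + 1) + 2 * m : ℕ) : ℂ)) ?_ ?_ hfin
    · intro a b hab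
      simp only [Nat.cast_inj] at hab
      omega
    · intro m
      exact Module.End.hasEigenvalue_of_hasEigenvector
        (x := (toEnd ℂ L V f ^ m) w) ⟨Module.End.mem_eigenspace_iff.2 (hh m), hne m⟩
  obtain ⟨m, hm1, hm2⟩ := Nat.exists_not_and_succ_of_not_zero_of_exists (by simpa using hw0) hex
  have prim : S.symm.trip.HasPrimitiveVectorWith ((toEnd ℂ L V f ^ m) w)
      ((n + 2 * (k + 1) + 2 * m : ℕ) : ℂ) :=
    ⟨hm1, hh m, by rw [pow_succ', Module.End.mul_apply] at hm2; exact hm2⟩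
  refine prim.pow_toEnd_f_ne_zero_of_eq_nat rfl le_rfl ?_
  refine cyc_above S hv (pow_mem _ _ _ (pow_mem _ _ _ hw)) (k + m) ?_
  rw [S.trip.lie_h_pow_toEnd_e (R := ℂ) (μ := -((n + 2 * (k + 1) + 2 * m : ℕ) : ℂ)), hn]
  · congr 1; push_cast; ring
  · rw [neg_smul, ← hh m, neg_lie, neg_neg]

lemma HW_nat {H : LieSubalgebra ℂ L} {P N : Set L} {h e f : L} (S : Setup H P N h e f)
    {μ : Module.Dual ℂ H} {v : V} (hv : IsHW H P μ v) : ∃ n : ℕ, μ ⟨h, S.hH⟩ = n :=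
  (HW_prim S hv).exists_nat

lemma cyc_bot {H : LieSubalgebra ℂ L} {P N : Set L} {h e f : L} (S : Setup H P N h e f)
    {μ : Module.Dual ℂ H} {v : V} (hv : IsHW H P μ v) {n : ℕ} (hn : μ ⟨h, S.hH⟩ = n) {u : V}
    (hu : u ∈ LieSubmodule.lieSpan ℂ L {v}) (hud : ⁅h, u⁆ = (-(n : ℂ)) • u) :
    ∃ a : ℂ, u = a • (toEnd ℂ L V f ^ n) v := by
  have key : ∀ w ∈ LieSubmodule.lieSpan ℂ L {v}, ⁅h, w⁆ = (-(n : ℂ)) • w → w ≠ 0 →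
      (toEnd ℂ L V e ^ n) w ≠ 0 := by
    intro w hw hwd hw0
    have prim : S.symm.trip.HasPrimitiveVectorWith w (n : ℂ) := by
      refine ⟨hw0, by rw [neg_lie, hwd, neg_smul, neg_neg], ?_⟩
      refine cyc_below S hv hn (LieSubmodule.lie_mem _ hw) 0 ?_
      rw [lie_deg (a := -2) (by rw [S.trip.lie_lie_smul_f ℂ, neg_smul]) hwd]
      congr 1; push_cast; ring
    exact prim.pow_toEnd_f_ne_zero_of_eq_nat rfl le_rfl
  have key2 : ∀ w ∈ LieSubmodule.lieSpan ℂ L {v}, ⁅h, w⁆ = (-(n : ℂ)) • w →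
      ∃ a : ℂ, (toEnd ℂ L V e ^ n) w = a • v := by
    intro w hw hwd
    refine cyc_top S hv (pow_mem _ _ _ hw) ?_
    rw [S.trip.lie_h_pow_toEnd_e (R := ℂ) hwd, hn]
    congr 1; ring
  have hm := pow_mem _ f n (mem_gen (L := L) v)
  have hd : ⁅h, (toEnd ℂ L V f ^ n) v⁆ = (-(n : ℂ)) • (toEnd ℂ L V f ^ n) v := by
    rw [(HW_prim S hv).lie_h_pow_toEnd_f, hn]; congr 1; ring
  have hne := (HW_prim S hv).pow_toEnd_f_ne_zero_of_eq_nat hn (le_refl n)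
  obtain ⟨C, hC⟩ := key2 _ hm hd
  have hC0 : C ≠ 0 := by
    rintro rfl
    exact key _ hm hd hne (by rw [hC, zero_smul])
  obtain ⟨b, hb⟩ := key2 _ hu hud
  refine ⟨b / C, ?_⟩
  by_contra hcon
  refine key (u - (b / C) • (toEnd ℂ L V f ^ n) v) ?_ ?_ (sub_ne_zero.2 hcon) ?_
  · exact sub_mem hu (SMulMemClass.smul_mem _ hm)
  · rw [lie_sub, lie_smul, hud, hd, smul_sub, smul_comm]
  · rw [map_sub, map_smul, hC, hb, smul_smul, div_mul_cancel₀ _ hC0, sub_self]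

/-- The lowest vector is a weight vector killed by the negative part. -/
lemma exists_lowest {H : LieSubalgebra ℂ L} {P N : Set L} {h e f : L} (S : Setup H P N h e f)
    {μ : Module.Dual ℂ H} {v : V} (hv : IsHW H P μ v) {n : ℕ} (hn : μ ⟨h, S.hH⟩ = n) :
    ∃ ν : Module.Dual ℂ H, IsHW H N ν ((toEnd ℂ L V f ^ n) v) ∧ ν ⟨h, S.hH⟩ = -(n : ℂ) := by
  have hne := (HW_prim S hv).pow_toEnd_f_ne_zero_of_eq_nat hn (le_refl n)
  have hm := pow_mem _ f n (mem_gen (L := L) v)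
  have hd : ⁅h, (toEnd ℂ L V f ^ n) v⁆ = (-(n : ℂ)) • (toEnd ℂ L V f ^ n) v := by
    rw [(HW_prim S hv).lie_h_pow_toEnd_f, hn]; congr 1; ring
  set u := (toEnd ℂ L V f ^ n) v with hu
  have hw : ∀ x : H, ∃ a : ℂ, ⁅(x : L), u⁆ = a • u := by
    intro x
    refine cyc_bot S hv hn (LieSubmodule.lie_mem _ hm) ?_
    rw [lie_deg (a := 0) (by rw [S.comm _ x.2, zero_smul]) hd, zero_add]
  obtain ⟨g, hg, -⟩ := Submodule.exists_le_ker_of_notMem (p := (⊥ : Submodule ℂ V)) (v := u)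
    (by simpa using hne)
  let ν : Module.Dual ℂ H :=
    { toFun := fun x => g ⁅(x : L), u⁆ / g u
      map_add' := fun x y => by simp [add_lie, add_div]
      map_smul' := fun a x => by simp [smul_lie, mul_div_assoc] }
  have hν : ∀ x : H, ⁅(x : L), u⁆ = ν x • u := by
    intro x
    obtain ⟨a, ha⟩ := hw x
    have : ν x = a := by
      change g ⁅(x : L), u⁆ / g u = a
      rw [ha, map_smul, smul_eq_mul, mul_div_cancel_right₀ _ hg]
    rw [this, ha]
  refine ⟨ν, ⟨hne, hν, fun y hy => ?_⟩, ?_⟩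
  · obtain ⟨k, hk⟩ := S.degN y hy
    refine cyc_below S hv hn (LieSubmodule.lie_mem _ hm) k ?_
    rw [lie_deg hk hd]
    congr 1; ring
  · have := hν ⟨h, S.hH⟩
    rw [hd] at this
    exact (smul_left_injective ℂ hne this).symm

end FD

section Prod
variable {W : Type} [AddCommGroup W] [Module ℂ W] [LieRingModule L W] [LieModule ℂ L W]

noncomputable instance prodLieRingModule : LieRingModule L (V × W) where
  bracket x p := (⁅x, p.1⁆, ⁅x, p.2⁆)
  add_lie x y p := by simp [add_lie]
  lie_add x p q := by simp [lie_add]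
  leibniz_lie x y p := by simp

lemma prod_lie (x : L) (p : V × W) : ⁅x, p⁆ = (⁅x, p.1⁆, ⁅x, p.2⁆) := rfl

noncomputable instance prodLieModule : LieModule ℂ L (V × W) where
  smul_lie t x p := by simp [prod_lie]
  lie_smul t x p := by simp [prod_lie]

lemma prod_pow (x : L) (n : ℕ) (p : V × W) :
    (toEnd ℂ L (V × W) x ^ n) p = ((toEnd ℂ L V x ^ n) p.1, (toEnd ℂ L W x ^ n) p.2) := by
  induction n with
  | zero => simp
  | succ n ih => simp only [pow_succ', Module.End.mul_apply, ih]; rfl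

lemma IsHW.prod {H : LieSubalgebra ℂ L} {P : Set L} {μ : Module.Dual ℂ H} {v : V} {w : W}
    (hv : IsHW H P μ v) (hw : IsHW H P μ w) : IsHW H P μ ((v, w) : V × W) where
  ne h := hv.ne (congrArg Prod.fst h)
  wt x := by rw [prod_lie, hv.wt, hw.wt]; rfl
  ann y hy := by rw [prod_lie, hv.ann y hy, hw.ann y hy]; rfl

lemma lowest_unique [FiniteDimensional ℂ V] [FiniteDimensional ℂ W] {H : LieSubalgebra ℂ L} {P N : Set L} {h e f : L} (S : Setup H P N h e f)
    {μ ν ν' : Module.Dual ℂ H} {v : V} {w : W} (hv : IsHW H P μ v) (hw : IsHW H P μ w) {n : ℕ}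
    (hn : μ ⟨h, S.hH⟩ = n)
    (hν : ∀ x : H, ⁅(x : L), (toEnd ℂ L V f ^ n) v⁆ = ν x • (toEnd ℂ L V f ^ n) v)
    (hν' : ∀ x : H, ⁅(x : L), (toEnd ℂ L W f ^ n) w⁆ = ν' x • (toEnd ℂ L W f ^ n) w) :
    ν = ν' := by
  obtain ⟨κ, hκ, -⟩ := exists_lowest S (hv.prod hw) hn
  have h1 := (HW_prim S hv).pow_toEnd_f_ne_zero_of_eq_nat hn (le_refl n)
  have h2 := (HW_prim S hw).pow_toEnd_f_ne_zero_of_eq_nat hn (le_refl n)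
  ext x
  have h3 := hκ.wt x
  rw [prod_pow, prod_lie] at h3
  have h4 := congrArg Prod.fst h3
  have h5 := congrArg Prod.snd h3
  simp only [Prod.smul_fst, Prod.smul_snd] at h4 h5
  rw [hν] at h4
  rw [hν'] at h5
  exact (smul_left_injective ℂ h1 h4).trans (smul_left_injective ℂ h2 h5).symm

lemma IsHW.tmul {H : LieSubalgebra ℂ L} {P : Set L} {μ μ' : Module.Dual ℂ H} {v : V} {w : W}
    (hv : IsHW H P μ v) (hw : IsHW H P μ' w) : IsHW H P (μ + μ') (v ⊗ₜ[ℂ] w) where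
  ne h := by
    obtain ⟨g, hg, -⟩ := Submodule.exists_le_ker_of_notMem (p := (⊥ : Submodule ℂ V)) (v := v)
      (by simpa using hv.ne)
    obtain ⟨g', hg', -⟩ := Submodule.exists_le_ker_of_notMem (p := (⊥ : Submodule ℂ W)) (v := w)
      (by simpa using hw.ne)
    have h1 := congrArg (LinearMap.mul' ℂ ℂ ∘ TensorProduct.map g g') h
    simp only [Function.comp_apply, TensorProduct.map_tmul, LinearMap.mul'_apply, map_zero] at h1
    exact (mul_ne_zero hg hg') h1
  wt x := by
    rw [TensorProduct.LieModule.lie_tmul_right, hv.wt, hw.wt, ← TensorProduct.smul_tmul',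
      TensorProduct.tmul_smul, ← add_smul, LinearMap.add_apply]
  ann y hy := by
    rw [TensorProduct.LieModule.lie_tmul_right, hv.ann y hy, hw.ann y hy]; simp

lemma pow_tmul [FiniteDimensional ℂ V] [FiniteDimensional ℂ W] {H : LieSubalgebra ℂ L} {P N : Set L} {h e f : L} (S : Setup H P N h e f)
    {μ μ' : Module.Dual ℂ H} {v : V} {w : W} (hv : IsHW H P μ v) (hw : IsHW H P μ' w) {n m : ℕ}
    (hn : μ ⟨h, S.hH⟩ = n) (hm : μ' ⟨h, S.hH⟩ = m) :
    ∃ C : ℂ, (toEnd ℂ L (V ⊗[ℂ] W) f ^ (n + m)) (v ⊗ₜ[ℂ] w) =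
      C • ((toEnd ℂ L V f ^ n) v ⊗ₜ[ℂ] (toEnd ℂ L W f ^ m) w) := by
  have h1 : toEnd ℂ L (V ⊗[ℂ] W) f =
      (toEnd ℂ L V f).rTensor W + (toEnd ℂ L W f).lTensor V := by
    ext a b
    simp [TensorProduct.LieModule.lie_tmul_right]
  have hcomm : Commute ((toEnd ℂ L V f).rTensor W) ((toEnd ℂ L W f).lTensor V) := by
    ext a b
    simp
  have hv0 : ∀ i, n < i → (toEnd ℂ L V f ^ i) v = 0 := by
    intro i hi
    obtain ⟨j, rfl⟩ := Nat.exists_eq_add_of_lt hi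
    rw [show n + j + 1 = j + (n + 1) by ring, pow_add, Module.End.mul_apply,
      (HW_prim S hv).pow_toEnd_f_eq_zero_of_eq_nat hn, map_zero]
  have hw0 : ∀ i, m < i → (toEnd ℂ L W f ^ i) w = 0 := by
    intro i hi
    obtain ⟨j, rfl⟩ := Nat.exists_eq_add_of_lt hi
    rw [show m + j + 1 = j + (m + 1) by ring, pow_add, Module.End.mul_apply,
      (HW_prim S hw).pow_toEnd_f_eq_zero_of_eq_nat hm, map_zero]
  refine ⟨((n + m).choose n : ℂ), ?_⟩
  rw [h1, hcomm.add_pow', LinearMap.sum_apply, Finset.sum_eq_single (n, m)]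
  · simp only [LinearMap.smul_apply, Module.End.mul_apply, LinearMap.rTensor_pow,
      LinearMap.lTensor_pow, LinearMap.lTensor_tmul, LinearMap.rTensor_tmul]
    rw [Nat.cast_smul_eq_nsmul]
  · rintro ⟨i, j⟩ hij hne
    rw [Finset.HasAntidiagonal.mem_antidiagonal] at hij
    simp only [LinearMap.smul_apply, Module.End.mul_apply, LinearMap.rTensor_pow,
      LinearMap.lTensor_pow, LinearMap.lTensor_tmul, LinearMap.rTensor_tmul]
    rcases lt_trichotomy i n with hi | hi | hi
    · rw [hw0 j (by omega)]; simp
    · exact absurd (by ext <;> simp <;> omega) hne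
    · rw [hv0 i hi]; simp
  · intro hh
    exact absurd (by simp) hh

end Prod

/-- `μ` is the highest and `ν` the lowest weight of some finite-dimensional module. -/
def Rel (H : LieSubalgebra ℂ L) (P : Set L) (f : L) (h : H) (μ ν : Module.Dual ℂ H) : Prop :=
  ∃ (V : Type) (_ : AddCommGroup V) (_ : Module ℂ V) (_ : LieRingModule L V)
    (_ : LieModule ℂ L V), FiniteDimensional ℂ V ∧ ∃ (v : V) (n : ℕ), IsHW H P μ v ∧ μ h = n ∧
    ∀ x : H, ⁅(x : L), (toEnd ℂ L V f ^ n) v⁆ = ν x • (toEnd ℂ L V f ^ n) v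

section Rel
variable {H : LieSubalgebra ℂ L} {P N : Set L} {h e f : L}

lemma Rel.unique (S : Setup H P N h e f) {μ ν ν' : Module.Dual ℂ H}
    (h1 : Rel H P f ⟨h, S.hH⟩ μ ν) (h2 : Rel H P f ⟨h, S.hH⟩ μ ν') : ν = ν' := by
  obtain ⟨V, _, _, _, _, _, v, n, hv, hn, hν⟩ := h1
  obtain ⟨W, _, _, _, _, _, w, m, hw, hm, hν'⟩ := h2
  have : m = n := by rw [hn] at hm; exact_mod_cast hm.symm
  subst this
  exact lowest_unique S hv hw hn hν hν'

lemma Rel.add (S : Setup H P N h e f) {μ ν μ' ν' : Module.Dual ℂ H}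
    (h1 : Rel H P f ⟨h, S.hH⟩ μ ν) (h2 : Rel H P f ⟨h, S.hH⟩ μ' ν') :
    Rel H P f ⟨h, S.hH⟩ (μ + μ') (ν + ν') := by
  obtain ⟨V, _, _, _, _, _, v, n, hv, hn, hν⟩ := h1
  obtain ⟨W, _, _, _, _, _, w, m, hw, hm, hν'⟩ := h2
  refine ⟨V ⊗[ℂ] W, inferInstance, inferInstance, inferInstance, inferInstance, inferInstance,
    v ⊗ₜ w, n + m, hv.tmul hw, by simp [hn, hm], fun x => ?_⟩
  obtain ⟨C, hC⟩ := pow_tmul S hv hw hn hm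
  rw [hC, lie_smul, TensorProduct.LieModule.lie_tmul_right, hν, hν', ← TensorProduct.smul_tmul',
      TensorProduct.tmul_smul, ← add_smul, LinearMap.add_apply, smul_comm]

lemma Rel.zero (h : H) : Rel H P f h 0 0 := by
  let _ : LieRingModule L ℂ :=
    { bracket := fun _ _ => 0
      add_lie := fun _ _ _ => (add_zero 0).symm
      lie_add := fun _ _ _ => (add_zero 0).symm
      leibniz_lie := fun _ _ _ => (add_zero 0).symm }
  have hb : ∀ (x : L) (z : ℂ), ⁅x, z⁆ = 0 := fun _ _ => rfl
  refine ⟨ℂ, inferInstance, inferInstance, inferInstance, ⟨fun t x m => ?_, fun t x m => ?_⟩,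
    inferInstance, 1, 0, ⟨one_ne_zero, fun x => ?_, fun y _ => ?_⟩, by simp, fun x => ?_⟩ <;>
  simp [hb]

lemma Rel.sum (S : Setup H P N h e f) {ι : Type} (s : Finset ι) (μ ν : ι → Module.Dual ℂ H)
    (hr : ∀ i, Rel H P f ⟨h, S.hH⟩ (μ i) (ν i)) (m : ι → ℕ) :
    Rel H P f ⟨h, S.hH⟩ (∑ i ∈ s, (m i : ℂ) • μ i) (∑ i ∈ s, (m i : ℂ) • ν i) := by
  classical
  have hsm : ∀ (i : ι) (k : ℕ), Rel H P f ⟨h, S.hH⟩ ((k : ℂ) • μ i) ((k : ℂ) • ν i) := by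
    intro i k
    induction k with
    | zero => simpa using Rel.zero _
    | succ k ih =>
      have := Rel.add S ih (hr i)
      simpa [add_smul] using this
  induction s using Finset.induction_on with
  | empty => simpa using Rel.zero _
  | insert a s ha ih =>
    rw [Finset.sum_insert ha, Finset.sum_insert ha]
    exact Rel.add S (hsm a _) ih

end Rel

end Aux

section Forms
variable {V : Type} [AddCommGroup V] [Module ℂ V] [LieRingModule L V] [LieModule ℂ L V]
variable {H : LieSubalgebra ℂ L} {P N : Set L} {h e f : L}

lemma gen_top (hs : IsSimpleOrder (LieSubmodule ℂ L V)) {v : V} (hv : v ≠ 0) (w : V) :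
    w ∈ LieSubmodule.lieSpan ℂ L {v} := by
  rcases hs.eq_bot_or_eq_top (LieSubmodule.lieSpan ℂ L {v}) with h | h
  · exact absurd (by have := mem_gen (L := L) v; rw [h] at this; simpa using this) hv
  · rw [h]; trivial

lemma form_pow (B : V →ₗ[ℂ] V →ₗ[ℂ] ℂ) (hB : ∀ (x : L) (v w : V), B ⁅x, v⁆ w + B v ⁅x, w⁆ = 0)
    (x : L) (n : ℕ) (v w : V) :
    B ((toEnd ℂ L V x ^ n) v) w = (-1) ^ n * B v ((toEnd ℂ L V x ^ n) w) := by
  induction n generalizing w with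
  | zero => simp
  | succ n ih =>
    rw [pow_succ', Module.End.mul_apply, toEnd_apply_apply, eq_neg_of_add_eq_zero_left (hB _ _ _),
      ih, ← pow_succ', pow_succ (toEnd ℂ L V x), Module.End.mul_apply, toEnd_apply_apply]
    ring

lemma form_orth (B : V →ₗ[ℂ] V →ₗ[ℂ] ℂ) (hB : ∀ (x : L) (v w : V), B ⁅x, v⁆ w + B v ⁅x, w⁆ = 0)
    {x : L} {a b : ℂ} {v w : V} (hv : ⁅x, v⁆ = a • v) (hw : ⁅x, w⁆ = b • w) (hab : a + b ≠ 0) :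
    B v w = 0 := by
  have := hB x v w
  rw [hv, hw, map_smul, map_smul, LinearMap.smul_apply, smul_eq_mul, smul_eq_mul,
    ← add_mul] at this
  exact (mul_eq_zero.1 this).resolve_left hab

variable [FiniteDimensional ℂ V]

lemma decomp (S : Setup H P N h e f) (hs : IsSimpleOrder (LieSubmodule ℂ L V))
    {ν : Module.Dual ℂ H} {u : V} {n : ℕ} (hu : IsHW H N ν u)
    (hνh : ν ⟨h, S.hH⟩ = -(n : ℂ)) (D : Submodule ℂ V) (huD : u ∈ D)
    (hlD : low V (-h) (n : ℂ) ≤ D) (w : V) : w ∈ D := by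
  have h1 := cyc_low S.symm hu (gen_top hs hu.ne w)
  have h2 : ν ⟨-h, S.symm.hH⟩ = (n : ℂ) := by
    have : (⟨-h, S.symm.hH⟩ : H) = -⟨h, S.hH⟩ := rfl
    rw [this, map_neg, hνh, neg_neg]
  rw [h2] at h1
  refine (sup_le ?_ hlD) h1
  rwa [Submodule.span_singleton_le_iff_mem]

lemma form_zero (S : Setup H P N h e f) (hs : IsSimpleOrder (LieSubmodule ℂ L V))
    {μ : Module.Dual ℂ H} {v : V} (hv : IsHW H P μ v) {n : ℕ} (hn : μ ⟨h, S.hH⟩ = n)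
    (B : V →ₗ[ℂ] V →ₗ[ℂ] ℂ) (hB : ∀ (x : L) (v w : V), B ⁅x, v⁆ w + B v ⁅x, w⁆ = 0)
    (h0 : B v ((toEnd ℂ L V f ^ n) v) = 0) : B = 0 := by
  obtain ⟨ν, hu, hνh⟩ := exists_lowest S hv hn
  have h1 : ∀ w, B v w = 0 := by
    refine decomp S hs hu hνh (LinearMap.ker (B v)) h0 ?_
    refine low_induction _ fun k w hw => ?_
    rw [LinearMap.mem_ker]
    have hv' : ⁅-h, v⁆ = (-(n : ℂ)) • v := by
      have := hv.wt ⟨h, S.hH⟩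
      rw [neg_lie, this, hn, neg_smul]
    refine form_orth B hB hv' hw ?_
    have : -(n : ℂ) + (n - 2 * ((k : ℂ) + 1)) = -(2 * ((k + 1 : ℕ) : ℂ)) := by push_cast; ring
    rw [this, neg_ne_zero]
    exact mul_ne_zero two_ne_zero (Nat.cast_ne_zero.2 (Nat.succ_ne_zero k))
  let R : LieSubmodule ℂ L V :=
    { LinearMap.ker B with
      lie_mem := fun {x m} (hm : B m = 0) => by
        change B ⁅x, m⁆ = 0
        ext w
        have := hB x m w
        rwa [hm, LinearMap.zero_apply, add_zero] at this }
  have hR : LieSubmodule.lieSpan ℂ L {v} ≤ R := by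
    rw [LieSubmodule.lieSpan_le]
    exact Set.singleton_subset_iff.2 (LinearMap.ext h1 : B v = 0)
  refine LinearMap.ext fun w => ?_
  exact hR (gen_top hs hv.ne w)

lemma even_case (S : Setup H P N h e f) (hs : IsSimpleOrder (LieSubmodule ℂ L V))
    {μ : Module.Dual ℂ H} {v : V} (hv : IsHW H P μ v) {n : ℕ} (hn : μ ⟨h, S.hH⟩ = n)
    (hev : Even n) (hd : IsDualPair (L := L) V V) :
    IsOrthogonalRep (L := L) V ∧ ¬ IsSymplecticRep (L := L) V := by
  have hsw : ∀ B : V →ₗ[ℂ] V →ₗ[ℂ] ℂ, (∀ (x : L) (v w : V), B ⁅x, v⁆ w + B v ⁅x, w⁆ = 0) →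
      B v ((toEnd ℂ L V f ^ n) v) = B ((toEnd ℂ L V f ^ n) v) v := by
    intro B hB
    rw [form_pow B hB, hev.neg_one_pow, one_mul]
  constructor
  · obtain ⟨B, h1, -, hB⟩ := hd
    refine ⟨B, fun a b => ?_, h1, hB⟩
    have : B - B.flip = 0 := by
      refine form_zero S hs hv hn _ (fun x a b => ?_) ?_
      · have e1 := hB x a b
        have e2 := hB x b a
        simp only [LinearMap.sub_apply, LinearMap.flip_apply]
        linear_combination e1 - e2
      · simp only [LinearMap.sub_apply, LinearMap.flip_apply]
        rw [hsw B hB, sub_self]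
    have h3 := LinearMap.congr_fun (LinearMap.congr_fun this a) b
    simpa [sub_eq_zero] using h3
  · rintro ⟨B, h1, h2, hB⟩
    have : B = 0 := by
      refine form_zero S hs hv hn _ hB ?_
      have e1 := hsw B hB
      have e2 := h1 (v + (toEnd ℂ L V f ^ n) v)
      simp only [map_add, LinearMap.add_apply, h1] at e2
      rw [← e1] at e2
      linear_combination e2 / 2
    exact hv.ne (h2 v (fun w => by rw [this]; rfl))

lemma rel_self (S : Setup H P N h e f) (hs : IsSimpleOrder (LieSubmodule ℂ L V))
    {μ : Module.Dual ℂ H} {v : V} (hv : IsHW H P μ v)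
    (hd : IsDualPair (L := L) V V) : Rel H P f ⟨h, S.hH⟩ μ (-μ) := by
  obtain ⟨n, hn⟩ := HW_nat S hv
  obtain ⟨ν, hu, hνh⟩ := exists_lowest S hv hn
  obtain ⟨B, h1, -, hB⟩ := hd
  have hne : B v ((toEnd ℂ L V f ^ n) v) ≠ 0 := by
    intro h0
    have := form_zero S hs hv hn B hB h0
    exact hv.ne (h1 v (fun w => by rw [this]; rfl))
  have : ν = -μ := by
    ext x
    have e := hB x v ((toEnd ℂ L V f ^ n) v)
    rw [hv.wt, hu.wt, map_smul, map_smul, LinearMap.smul_apply, smul_eq_mul, smul_eq_mul,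
      ← add_mul] at e
    have := (mul_eq_zero.1 e).resolve_right hne
    rw [LinearMap.neg_apply]
    linear_combination this
  subst this
  exact ⟨V, _, _, _, ‹_›, ‹_›, v, n, hv, hn, hu.wt⟩

lemma low_lie {y : L} {c : ℂ} (hy : ⁅h, y⁆ = 0 ∨ ∃ k : ℕ, ⁅h, y⁆ = (-(2 * ((k : ℂ) + 1))) • y) {w : V}
    (hw : w ∈ low V h c) : ⁅y, w⁆ ∈ low V h c := by
  have : low V h c ≤ (low V h c).comap (toEnd ℂ L V y) := by
    refine low_induction _ fun l w hw => ?_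
    rcases hy with hy | ⟨k, hy⟩
    · refine mem_low l ?_
      rw [toEnd_apply_apply, lie_deg (a := 0) (by rw [hy, zero_smul]) hw, zero_add]
    · refine mem_low (k + l + 1) ?_
      rw [toEnd_apply_apply, lie_deg hy hw]
      congr 1; push_cast; ring
  exact this hw

lemma dual_hw (S : Setup H P N h e f) (hs : IsSimpleOrder (LieSubmodule ℂ L V))
    {ν : Module.Dual ℂ H} {u : V} {n : ℕ} (hu : IsHW H N ν u)
    (hνh : ν ⟨h, S.hH⟩ = -(n : ℂ)) :
    ∃ v' : V →ₗ[ℂ] ℂ, IsHW H P (-ν) v' ∧ v' u ≠ 0 := by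
  have hud : ⁅-h, u⁆ = (n : ℂ) • u := by
    have := hu.wt ⟨h, S.hH⟩
    rw [neg_lie, this, hνh, neg_smul, neg_neg]
  have hul : u ∉ low V (-h) (n : ℂ) := by
    intro hmem
    refine hu.ne (low_disj hmem hud ?_)
    intro k hk
    have : (2 * ((k : ℂ) + 1)) = 0 := by linear_combination -hk
    norm_cast at this
  obtain ⟨g, hg, hl⟩ := Submodule.exists_le_ker_of_notMem hul
  refine ⟨g, ⟨fun h0 => hg (by rw [h0]; rfl), fun x => ?_, fun y hy => ?_⟩, hg⟩
  · ext w
    rw [Module.Dual.lie_apply]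
    have := decomp S hs hu hνh (LinearMap.ker (g ∘ₗ toEnd ℂ L V (x : L) - ν x • g)) ?_ ?_ w
    · rw [LinearMap.mem_ker] at this
      simp only [LinearMap.sub_apply, LinearMap.comp_apply, toEnd_apply_apply,
        LinearMap.smul_apply, smul_eq_mul] at this
      simp only [LinearMap.neg_apply, LinearMap.smul_apply, smul_eq_mul]
      linear_combination -this
    · rw [LinearMap.mem_ker]
      simp [hu.wt]
    · intro w hw
      have h1 := hl hw
      have h2 := hl (low_lie (y := (x : L)) (Or.inl (by rw [neg_lie, S.comm _ x.2, neg_zero])) hw)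
      rw [LinearMap.mem_ker] at h1 h2 ⊢
      simp [h1, h2]
  · obtain ⟨k, hk⟩ := S.degP y hy
    have hk' : ⁅-h, y⁆ = (-(2 * ((k : ℂ) + 1))) • y := by rw [neg_lie, hk, neg_smul]
    ext w
    rw [Module.Dual.lie_apply]
    have := decomp S hs hu hνh (LinearMap.ker (g ∘ₗ toEnd ℂ L V y)) ?_ ?_ w
    · rw [LinearMap.mem_ker] at this
      simp only [LinearMap.comp_apply, toEnd_apply_apply] at this
      rw [this]; simp
    · refine hl (mem_low k ?_)
      rw [toEnd_apply_apply, lie_deg hk' hud]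
      congr 1; ring
    · intro w hw
      exact hl (low_lie (Or.inr ⟨k, hk'⟩) hw)

lemma dual_pow (x : L) (n : ℕ) (g : V →ₗ[ℂ] ℂ) (w : V) :
    ((toEnd ℂ L (V →ₗ[ℂ] ℂ) x ^ n) g) w = (-1) ^ n * g ((toEnd ℂ L V x ^ n) w) := by
  induction n generalizing w with
  | zero => simp
  | succ n ih =>
    rw [pow_succ', Module.End.mul_apply, toEnd_apply_apply, Module.Dual.lie_apply,
      ih, pow_succ (toEnd ℂ L V x), Module.End.mul_apply, toEnd_apply_apply]
    ring

lemma rel_dual (S : Setup H P N h e f) (hs : IsSimpleOrder (LieSubmodule ℂ L V))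
    {μ ν : Module.Dual ℂ H} {v : V} (hv : IsHW H P μ v) {n : ℕ} (hn : μ ⟨h, S.hH⟩ = n)
    (hu : IsHW H N ν ((toEnd ℂ L V f ^ n) v))
    (hνh : ν ⟨h, S.hH⟩ = -(n : ℂ)) : Rel H P f ⟨h, S.hH⟩ (-ν) (-μ) := by
  obtain ⟨v', hv', hne⟩ := dual_hw S hs hu hνh
  have hn' : (-ν) ⟨h, S.hH⟩ = (n : ℂ) := by rw [LinearMap.neg_apply, hνh, neg_neg]
  obtain ⟨κ, hκ, -⟩ := exists_lowest S hv' hn'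
  have h0 : ((toEnd ℂ L (V →ₗ[ℂ] ℂ) f ^ n) v') v ≠ 0 := by
    rw [dual_pow]
    exact mul_ne_zero (pow_ne_zero _ (by norm_num)) hne
  have : κ = -μ := by
    ext x
    have h1 := LinearMap.congr_fun (hκ.wt x) v
    rw [Module.Dual.lie_apply, hv.wt, map_smul, LinearMap.smul_apply, smul_eq_mul, smul_eq_mul,
      ← neg_mul] at h1
    exact (mul_right_cancel₀ h0 h1).symm
  subst this
  exact ⟨V →ₗ[ℂ] ℂ, _, _, _, inferInstance, inferInstance, v', n, hv', hn', hκ.wt⟩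

lemma self_dual (S : Setup H P N h e f) (hs : IsSimpleOrder (LieSubmodule ℂ L V))
    {μ : Module.Dual ℂ H} {v : V} (hv : IsHW H P μ v) {n : ℕ} (hn : μ ⟨h, S.hH⟩ = n)
    (hu : IsHW H N (-μ) ((toEnd ℂ L V f ^ n) v)) : IsDualPair (L := L) V V := by
  obtain ⟨v', hv', hne⟩ := dual_hw S hs hu (by rw [LinearMap.neg_apply, hn])
  rw [neg_neg] at hv'
  have hvv := hv.prod hv'
  set T := LieSubmodule.lieSpan ℂ L {((v, v') : V × (V →ₗ[ℂ] ℂ))} with hT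
  let K : Submodule ℂ (V →ₗ[ℂ] ℂ) := T.toSubmodule.comap (LinearMap.inr ℂ V (V →ₗ[ℂ] ℂ))
  have hKT : ∀ g, g ∈ K → ((0, g) : V × (V →ₗ[ℂ] ℂ)) ∈ T := fun g hg => hg
  have hTK : ∀ g, ((0, g) : V × (V →ₗ[ℂ] ℂ)) ∈ T → g ∈ K := fun g hg => hg
  have hKl : ∀ (x : L) g, g ∈ K → ⁅x, g⁆ ∈ K := by
    intro x g hg
    have := T.lie_mem (x := x) (hKT g hg)
    rw [prod_lie, lie_zero] at this
    exact hTK _ this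
  let A : LieSubmodule ℂ L V :=
    { Submodule.dualCoannihilator K with
      lie_mem := fun {x m} (hm : m ∈ Submodule.dualCoannihilator K) => by
        change ⁅x, m⁆ ∈ Submodule.dualCoannihilator K
        rw [Submodule.mem_dualCoannihilator] at hm ⊢
        intro g hg
        have := hm _ (hKl x g hg)
        rwa [Module.Dual.lie_apply, neg_eq_zero] at this }
  have hK : ∀ g ∈ K, g = 0 := by
    rcases hs.eq_bot_or_eq_top A with hA | hA
    · exfalso
      have h1 : Submodule.dualCoannihilator K = ⊥ := by
        rw [eq_bot_iff]
        intro m hm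
        have : m ∈ A := hm
        rw [hA] at this
        simpa using this
      have h2 : K = ⊤ := by
        have := Subspace.dualCoannihilator_dualAnnihilator_eq (W := K)
        rw [h1, Submodule.dualAnnihilator_bot] at this
        exact this.symm
      have h3 : ((0, v') : V × (V →ₗ[ℂ] ℂ)) ∈ T := hKT v' (by rw [h2]; trivial)
      obtain ⟨a, ha⟩ := cyc_top S hvv h3 (by
        rw [prod_lie, lie_zero, hv'.wt ⟨h, S.hH⟩]; ext <;> simp)
      have h4 : (0 : V) = a • v := congrArg Prod.fst ha
      have h5 : v' = a • v' := congrArg Prod.snd ha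
      have : a = 0 := (smul_eq_zero.1 h4.symm).resolve_right hv.ne
      rw [this, zero_smul] at h5
      exact hv'.ne h5
    · intro g hg
      ext m
      have hm : m ∈ A := by rw [hA]; trivial
      exact (Submodule.mem_dualCoannihilator m).1 hm g hg
  have huniq : ∀ w g g', ((w, g) : V × (V →ₗ[ℂ] ℂ)) ∈ T → ((w, g') : V × (V →ₗ[ℂ] ℂ)) ∈ T →
      g = g' := by
    intro w g g' h1 h2
    have := sub_mem h1 h2
    rw [Prod.mk_sub_mk, sub_self] at this
    exact sub_eq_zero.1 (hK _ (hTK _ this))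
  have hex : ∀ w, ∃ g, ((w, g) : V × (V →ₗ[ℂ] ℂ)) ∈ T := by
    let D : LieSubmodule ℂ L V :=
      { T.toSubmodule.map (LinearMap.fst ℂ V (V →ₗ[ℂ] ℂ)) with
        lie_mem := fun {x m} hm => by
          obtain ⟨p, hp, rfl⟩ := hm
          exact ⟨⁅x, p⁆, T.lie_mem hp, rfl⟩ }
    have hD : LieSubmodule.lieSpan ℂ L {v} ≤ D := by
      rw [LieSubmodule.lieSpan_le]
      exact Set.singleton_subset_iff.2 ⟨(v, v'), mem_gen _, rfl⟩
    intro w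
    obtain ⟨⟨a, g⟩, hp, rfl⟩ := hD (gen_top hs hv.ne w)
    exact ⟨g, hp⟩
  choose φ hφ using hex
  let B : V →ₗ[ℂ] V →ₗ[ℂ] ℂ :=
    { toFun := φ
      map_add' := fun a b => huniq _ _ _ (hφ _) (add_mem (hφ a) (hφ b))
      map_smul' := fun t a => huniq _ _ _ (hφ _) (SMulMemClass.smul_mem t (hφ a)) }
  have hB : ∀ (x : L) (v w : V), B ⁅x, v⁆ w + B v ⁅x, w⁆ = 0 := by
    intro x a b
    have h1 : φ ⁅x, a⁆ = ⁅x, φ a⁆ := huniq _ _ _ (hφ _) (T.lie_mem (x := x) (hφ a))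
    change φ ⁅x, a⁆ b + φ a ⁅x, b⁆ = 0
    rw [h1, Module.Dual.lie_apply, neg_add_cancel]
  have hBv : B v = v' := huniq _ _ _ (hφ _) (mem_gen _)
  have hBne : B v ((toEnd ℂ L V f ^ n) v) ≠ 0 := by rw [hBv]; exact hne
  let R1 : LieSubmodule ℂ L V :=
    { LinearMap.ker B with
      lie_mem := fun {x m} (hm : B m = 0) => by
        change B ⁅x, m⁆ = 0
        ext w
        have := hB x m w
        rwa [hm, LinearMap.zero_apply, add_zero] at this }
  let R2 : LieSubmodule ℂ L V :=
    { LinearMap.ker B.flip with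
      lie_mem := fun {x m} (hm : B.flip m = 0) => by
        change B.flip ⁅x, m⁆ = 0
        ext w
        have := hB x w m
        have h2 := LinearMap.congr_fun hm ⁅x, w⁆
        rw [LinearMap.flip_apply, LinearMap.zero_apply] at h2
        rwa [h2, zero_add] at this }
  refine ⟨B, fun w hw => ?_, fun w hw => ?_, hB⟩
  · rcases hs.eq_bot_or_eq_top R1 with hR | hR
    · have : w ∈ R1 := (LinearMap.ext hw : B w = 0)
      rw [hR] at this
      simpa using this
    · have : v ∈ R1 := by rw [hR]; trivial
      have h3 : B v = 0 := this
      exact absurd (by rw [h3]; rfl) hBne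
  · rcases hs.eq_bot_or_eq_top R2 with hR | hR
    · have : w ∈ R2 := (LinearMap.ext hw : B.flip w = 0)
      rw [hR] at this
      simpa using this
    · have : (toEnd ℂ L V f ^ n) v ∈ R2 := by rw [hR]; trivial
      have h3 : B.flip ((toEnd ℂ L V f ^ n) v) = 0 := this
      exact absurd (LinearMap.congr_fun h3 v) hBne

end Forms

lemma comb {r : ℕ} (P : Fin r → Fin r → ℕ)
    (hP : ∀ j l, ∑ k, P j k * P k l = if j = l then 1 else 0) (c m : Fin r → ℕ)
    (hc : ∀ j, c j = ∑ k, P j k * c k) (hm : ∀ k, m k = ∑ j, m j * P j k)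
    (h0 : ∀ j, (∀ k, P j k = if j = k then 1 else 0) → m j = 0) : Even (∑ j, m j * c j) := by
  have h1 : ∀ j, ∃ k, P j k = 1 ∧ P k j = 1 := by
    intro j
    have hj := hP j j
    rw [if_pos rfl] at hj
    obtain ⟨k, -, hk⟩ := Finset.exists_ne_zero_of_sum_ne_zero (by rw [hj]; exact one_ne_zero)
    have hle := Finset.single_le_sum (f := fun k => P j k * P k j) (fun i _ => Nat.zero_le _)
      (Finset.mem_univ k)
    simp only [hj] at hle
    have : P j k * P k j = 1 := by omega
    exact ⟨k, Nat.eq_one_of_mul_eq_one_right this, Nat.eq_one_of_mul_eq_one_left this⟩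
  choose σ h1 h2 using h1
  have h3 : ∀ j l, P (σ j) l = if j = l then 1 else 0 := by
    intro j l
    have hj := hP j l
    split_ifs with hjl
    · rw [← hjl]; exact h2 j
    · rw [if_neg hjl, Finset.sum_eq_zero_iff] at hj
      have := hj (σ j) (Finset.mem_univ _)
      rwa [h1, one_mul] at this
  have h4 : ∀ j, σ (σ j) = j := by
    intro j
    have := h1 (σ j)
    rw [h3] at this
    by_contra hne
    rw [if_neg (Ne.symm hne)] at this
    exact zero_ne_one this
  have h5 : ∀ j l, P j l = if σ j = l then 1 else 0 := by
    intro j l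
    rw [← h3, h4]
  have hcσ : ∀ j, c (σ j) = c j := by
    intro j
    rw [hc j]
    simp [h5]
  have hmσ : ∀ j, m (σ j) = m j := by
    intro j
    rw [hm (σ j), Finset.sum_eq_single j]
    · rw [h1, mul_one]
    · intro b _ hb
      rw [h5, if_neg, mul_zero]
      intro hh
      exact hb (by rw [← h4 b, hh, h4])
    · simp
  have hfix : ∀ j, σ j = j → m j = 0 := by
    intro j hj
    refine h0 j fun k => ?_
    rw [h5, hj]
  rw [← ZMod.natCast_eq_zero_iff_even]
  push_cast
  refine Finset.sum_involution (fun j _ => σ j) ?_ ?_ ?_ ?_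
  · intro j _
    rw [hcσ, hmσ]
    exact CharTwo.add_self_eq_zero _
  · intro j _ hne hj
    exact hne (by rw [hfix j hj]; simp)
  · intro j _; exact Finset.mem_univ _
  · intro j _; exact h4 j

section Roots
variable (H : LieSubalgebra ℂ L) [H.IsCartanSubalgebra] {r : ℕ} (α : Fin r → Module.Dual ℂ H)

/-- Union of the positive root spaces. -/
def PosSet : Set L := {y | ∃ χ, IsPosRoot H α χ ∧ y ∈ rootSpace H ⇑χ}

/-- Union of the negative root spaces. -/
def NegSet : Set L := {y | ∃ χ, IsPosRoot H α χ ∧ y ∈ rootSpace H ⇑(-χ)}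

variable {H α} [FiniteDimensional ℂ L] [LieAlgebra.IsKilling ℂ L]

lemma weight_isRoot (β : Weight ℂ H L) (hβ : β.IsNonZero) : IsRoot H β.toLinear := by
  refine ⟨fun h0 => hβ ?_, β.genWeightSpace_ne_bot⟩
  change ⇑β = 0
  ext x
  exact LinearMap.congr_fun h0 x

lemma top_decomp (hb : IsBase H α) :
    Submodule.span ℂ (PosSet H α) ⊔ H.toSubmodule ⊔ Submodule.span ℂ (NegSet H α) = ⊤ := by
  have h1 := congrArg LieSubmodule.toSubmodule
    (cartan_sup_iSup_rootSpace_eq_top (K := ℂ) (L := L) (H := H))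
  rw [eq_top_iff]
  rw [LieSubmodule.top_toSubmodule] at h1
  rw [← h1]
  simp only [LieSubmodule.sup_toSubmodule, LieSubmodule.iSup_toSubmodule]
  refine sup_le ?_ (iSup₂_le fun β hβ => ?_)
  · exact le_sup_of_le_left le_sup_right
  · have hr := weight_isRoot β hβ
    rcases hb.pos_neg _ hr with ⟨c, hc⟩ | ⟨c, hc⟩
    · refine le_sup_of_le_left (le_sup_of_le_left ?_)
      intro y hy
      exact Submodule.subset_span ⟨β.toLinear, ⟨hr, c, hc⟩, hy⟩
    · refine le_sup_of_le_right ?_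
      intro y hy
      refine Submodule.subset_span ⟨(-β).toLinear,
        ⟨weight_isRoot _ (Weight.isNonZero_neg.2 hβ), c, ?_⟩, ?_⟩
      · rw [Weight.toLinear_neg, hc, neg_neg]
      · rw [Weight.toLinear_neg, neg_neg]
        exact hy

lemma dual_span (hb : IsBase H α) : Submodule.span ℂ (Set.range α) = ⊤ := by
  rw [eq_top_iff, ← LieAlgebra.IsKilling.span_weight_isNonZero_eq_top ℂ L H, Submodule.span_le]
  rintro χ ⟨β, hβ, rfl⟩
  have hs : ∀ c : Fin r → ℕ, ∑ j, (c j : ℂ) • α j ∈ Submodule.span ℂ (Set.range α) :=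
    fun c => Submodule.sum_mem _ fun j _ =>
      Submodule.smul_mem _ _ (Submodule.subset_span ⟨j, rfl⟩)
  rcases hb.pos_neg _ (weight_isRoot β hβ) with ⟨c, hc⟩ | ⟨c, hc⟩
  · exact hc ▸ hs c
  · exact hc ▸ Submodule.neg_mem _ (hs c)

lemma exists_dual (hb : IsBase H α) (a : Fin r → ℂ) : ∃ t : H, ∀ j, α j t = a j := by
  let b := Module.Basis.mk hb.indep (dual_span hb).ge
  let φ : Module.Dual ℂ (Module.Dual ℂ H) := b.constr ℂ a
  refine ⟨(Module.evalEquiv ℂ H).symm φ, fun j => ?_⟩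
  rw [Module.apply_evalEquiv_symm_apply]
  have : α j = b j := by simp [b]
  rw [this, Module.Basis.constr_basis]

lemma coroot_span (hb : IsBase H α) {hc : Fin r → H} {ϖ : Fin r → Module.Dual ℂ H}
    (hϖ : ∀ j k, ϖ j (hc k) = if j = k then (1 : ℂ) else 0) :
    Submodule.span ℂ (Set.range hc) = ⊤ := by
  have hli : LinearIndependent ℂ hc := by
    rw [Fintype.linearIndependent_iff]
    intro g hg i
    have := congrArg (ϖ i) hg
    simpa [hϖ] using this
  refine hli.span_eq_top_of_card_eq_finrank' ?_
  have h1 := Module.finrank_eq_card_basis (Module.Basis.mk hb.indep (dual_span hb).ge)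
  rw [← h1, Subspace.dual_finrank_eq]

lemma weight_expand (hb : IsBase H α) {hc : Fin r → H} {ϖ : Fin r → Module.Dual ℂ H}
    (hϖ : ∀ j k, ϖ j (hc k) = if j = k then (1 : ℂ) else 0) (l : Module.Dual ℂ H) :
    l = ∑ k, l (hc k) • ϖ k := by
  refine LinearMap.ext_on_range (coroot_span hb hϖ) fun i => ?_
  simp [LinearMap.sum_apply, hϖ]

lemma root_bracket (hb : IsBase H α) {i j : Fin r} (hij : i ≠ j) {e f : L}
    (he : e ∈ rootSpace H ⇑(α i)) (hf : f ∈ rootSpace H ⇑(-α j)) : ⁅e, f⁆ = 0 := by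
  by_contra hne
  have h1 : ⁅e, f⁆ ∈ rootSpace H ⇑(α i + -α j) :=
    lie_mem_genWeightSpace_of_mem_genWeightSpace he hf
  obtain ⟨ti, hti⟩ := exists_dual hb (fun k => if k = i then 1 else 0)
  obtain ⟨tj, htj⟩ := exists_dual hb (fun k => if k = j then 1 else 0)
  have hr : IsRoot H (α i + -α j) := by
    refine ⟨fun h0 => ?_, fun h0 => ?_⟩
    · have := LinearMap.congr_fun h0 ti
      simp [hti, hij.symm] at this
    · rw [h0] at h1
      exact hne (by simpa using h1)
  rcases hb.pos_neg _ hr with ⟨c, hc⟩ | ⟨c, hc⟩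
  · have := LinearMap.congr_fun hc tj
    simp [htj, hij, LinearMap.sum_apply] at this
    have h2 : ((c j + 1 : ℕ) : ℂ) = 0 := by push_cast; linear_combination -this
    exact Nat.succ_ne_zero _ (Nat.cast_eq_zero.1 h2)
  · have := LinearMap.congr_fun hc ti
    simp [hti, hij.symm, LinearMap.sum_apply] at this
    have h2 : ((c i + 1 : ℕ) : ℂ) = 0 := by push_cast; linear_combination this
    exact Nat.succ_ne_zero _ (Nat.cast_eq_zero.1 h2)

lemma simple_pos (hb : IsBase H α) (j : Fin r) : IsPosRoot H α (α j) :=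
  ⟨hb.isRoot j, Pi.single j 1, by simp [Pi.single_apply]⟩

lemma pos_height {χ : Module.Dual ℂ H} (hχ : IsPosRoot H α χ) {t : H} (ht : ∀ j, α j t = 2) :
    ∃ k : ℕ, χ t = 2 * ((k : ℂ) + 1) := by
  obtain ⟨⟨h0, -⟩, c, hc⟩ := hχ
  have hne : ∑ j, c j ≠ 0 := by
    intro hs
    rw [Finset.sum_eq_zero_iff] at hs
    refine h0 ?_
    rw [hc]
    exact Finset.sum_eq_zero fun j hj => by rw [hs j hj]; simp
  obtain ⟨k, hk⟩ := Nat.exists_eq_succ_of_ne_zero hne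
  refine ⟨k, ?_⟩
  have h2 : ((k : ℂ) + 1) = ((∑ j, c j : ℕ) : ℂ) := by rw [hk]; push_cast; rfl
  rw [h2, hc]
  simp [LinearMap.sum_apply, ht, Finset.mul_sum, mul_comm]

lemma exists_setup (hb : IsBase H α) {hc : Fin r → H} (hcr : ∀ j, IsCoroot H (α j) (hc j))
    {ϖ : Fin r → Module.Dual ℂ H}
    (hϖ : ∀ j k, ϖ j (hc k) = if j = k then (1 : ℂ) else 0) (j0 : Fin r) :
    ∃ h e f : L, Setup H (PosSet H α) (NegSet H α) h e f := by
  obtain ⟨t, ht⟩ := exists_dual hb (fun _ => 2)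
  have htm : t ∈ Submodule.span ℂ (Set.range hc) := by rw [coroot_span hb hϖ]; trivial
  obtain ⟨c, hct⟩ := (Submodule.mem_span_range_iff_exists_fun ℂ).1 htm
  choose h2 e he f hf hef using hcr
  have lieP : ∀ χ : Module.Dual ℂ H, ∀ y ∈ rootSpace H ⇑χ, ⁅(t : L), y⁆ = χ t • y :=
    fun χ y hy => LieAlgebra.IsKilling.lie_eq_smul_of_mem_rootSpace hy t
  refine ⟨t, ∑ j, e j, ∑ j, c j • f j, ⟨⟨?_, ?_, ?_, ?_⟩, t.2, ?_, ?_, top_decomp hb, ?_, ?_, ?_⟩⟩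
  · intro h0
    have h1 : t = 0 := Subtype.ext h0
    have := ht j0
    rw [h1, map_zero] at this
    exact two_ne_zero this.symm
  · rw [sum_lie]
    have : (t : L) = ∑ j, c j • (hc j : L) := by
      rw [← hct]; simp
    rw [this]
    refine Finset.sum_congr rfl fun i _ => ?_
    rw [lie_sum, Finset.sum_eq_single i]
    · rw [lie_smul, hef]
    · intro j _ hj
      rw [lie_smul, root_bracket hb hj.symm (he i) (hf j), smul_zero]
    · simp
  · rw [lie_sum, Finset.smul_sum]
    refine Finset.sum_congr rfl fun i _ => ?_
    rw [lieP _ _ (he i), ht, ofNat_smul_eq_nsmul]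
  · rw [lie_sum, Finset.smul_sum, ← Finset.sum_neg_distrib]
    refine Finset.sum_congr rfl fun i _ => ?_
    rw [lie_smul, lieP _ _ (hf i), LinearMap.neg_apply, ht, neg_smul, ofNat_smul_eq_nsmul,
      smul_neg, smul_comm]
  · exact Submodule.sum_mem _ fun i _ => Submodule.subset_span ⟨α i, simple_pos hb i, he i⟩
  · exact Submodule.sum_mem _ fun i _ => Submodule.smul_mem _ _
      (Submodule.subset_span ⟨α i, simple_pos hb i, hf i⟩)
  · rintro y ⟨χ, hχ, hy⟩
    obtain ⟨k, hk⟩ := pos_height hχ ht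
    exact ⟨k, by rw [lieP _ _ hy, hk]⟩
  · rintro y ⟨χ, hχ, hy⟩
    obtain ⟨k, hk⟩ := pos_height hχ ht
    exact ⟨k, by rw [lieP _ _ hy, LinearMap.neg_apply, hk]⟩
  · intro x hx
    have := LieModule.IsTrivial.trivial t (⟨x, hx⟩ : H)
    exact congrArg Subtype.val this

lemma lowest_nat {V : Type} [AddCommGroup V] [Module ℂ V] [LieRingModule L V] [LieModule ℂ L V]
    [FiniteDimensional ℂ V] (hb : IsBase H α) {t : H} {j : Fin r} (ht : IsCoroot H (α j) t)
    {ν : Module.Dual ℂ H} {u : V} (hu : IsHW H (NegSet H α) ν u) :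
    ∃ p : ℕ, ν t = -(p : ℂ) := by
  obtain ⟨h2, e, he, f, hf, hef⟩ := ht
  have lieP : ∀ χ : Module.Dual ℂ H, ∀ y ∈ rootSpace H ⇑χ, ⁅(t : L), y⁆ = χ t • y :=
    fun χ y hy => LieAlgebra.IsKilling.lie_eq_smul_of_mem_rootSpace hy t
  have trip : IsSl2Triple (t : L) e f := by
    refine ⟨fun h0 => ?_, hef.symm, ?_, ?_⟩
    · have h1 : t = 0 := Subtype.ext h0
      rw [h1, map_zero] at h2
      exact two_ne_zero h2.symm
    · rw [lieP _ _ he, h2, ofNat_smul_eq_nsmul]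
    · rw [lieP _ _ hf, LinearMap.neg_apply, h2, neg_smul, ofNat_smul_eq_nsmul]
  have prim : trip.symm.HasPrimitiveVectorWith u (-ν t) := by
    refine ⟨hu.ne, ?_, hu.ann f ⟨α j, simple_pos hb j, hf⟩⟩
    rw [neg_lie, hu.wt, neg_smul]
  obtain ⟨p, hp⟩ := prim.exists_nat
  exact ⟨p, by rw [← hp, neg_neg]⟩

lemma to_HW {V : Type} [AddCommGroup V] [Module ℂ V] [LieRingModule L V] [LieModule ℂ L V]
    {μ : Module.Dual ℂ H} (hV : IsHWIrrep H α μ V) : ∃ v : V, IsHW H (PosSet H α) μ v := by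
  obtain ⟨-, v, h1, h2, h3⟩ := hV
  exact ⟨v, h1, h2, fun y ⟨χ, hχ, hy⟩ => h3 χ hχ y hy⟩

end Roots

lemma main_pos [FiniteDimensional ℂ L] [LieAlgebra.IsKilling ℂ L]
    (H : LieSubalgebra ℂ L) [H.IsCartanSubalgebra]
    {r : ℕ} (j0 : Fin r) (α : Fin r → Module.Dual ℂ H) (hc : Fin r → H)
    (hbase : IsBase H α) (hcoroot : ∀ j, IsCoroot H (α j) (hc j))
    (ϖ : Fin r → Module.Dual ℂ H)
    (hϖ : ∀ j k, ϖ j (hc k) = if j = k then (1 : ℂ) else 0)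
    (F : Fin r → Type) [∀ j, AddCommGroup (F j)] [∀ j, Module ℂ (F j)]
    [∀ j, LieRingModule L (F j)] [∀ j, LieModule ℂ L (F j)] [∀ j, FiniteDimensional ℂ (F j)]
    (hF : ∀ j, IsHWIrrep H α (ϖ j) (F j))
    (μ : Module.Dual ℂ H) (hμ : IsDomInt hc μ)
    (Vμ : Type) [AddCommGroup Vμ] [Module ℂ Vμ] [LieRingModule L Vμ]
    [LieModule ℂ L Vμ] [FiniteDimensional ℂ Vμ]
    (hVμ : IsHWIrrep H α μ Vμ)
    (hselfdual : IsDualPair (L := L) Vμ Vμ)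
    (hvanish : ∀ j, IsDualPair (L := L) (F j) (F j) → μ (hc j) = 0) :
    IsOrthogonalRep (L := L) Vμ ∧ ¬ IsSymplecticRep (L := L) Vμ := by
  obtain ⟨h, e, f, S⟩ := exists_setup hbase hcoroot hϖ j0
  choose v hv using fun j => to_HW (hF j)
  obtain ⟨vμ, hvμ⟩ := to_HW hVμ
  choose n hn using fun j => HW_nat S (hv j)
  choose ν hν hνh using fun j => exists_lowest S (hv j) (hn j)
  choose p hp using fun j k => lowest_nat hbase (hcoroot k) (hν j)
  choose m hm using hμ
  have hexp : ∀ j, -ν j = ∑ k, (p j k : ℂ) • ϖ k := by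
    intro j
    rw [weight_expand hbase hϖ (-ν j)]
    simp [hp]
  have hμexp : μ = ∑ k, (m k : ℂ) • ϖ k := by
    conv_lhs => rw [weight_expand hbase hϖ μ]
    simp [hm]
  have R1 : ∀ j, Rel H (PosSet H α) f ⟨h, S.hH⟩ (ϖ j) (ν j) := fun j =>
    ⟨F j, _, _, _, inferInstance, inferInstance, v j, n j, hv j, hn j, (hν j).wt⟩
  have R2 : ∀ j, Rel H (PosSet H α) f ⟨h, S.hH⟩ (-ν j) (-ϖ j) := fun j =>
    rel_dual S (hF j).1 (hv j) (hn j) (hν j) (hνh j)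
  have E1 : ∀ j, -ϖ j = ∑ k, (p j k : ℂ) • ν k := by
    intro j
    refine Rel.unique S (R2 j) ?_
    rw [hexp j]
    exact Rel.sum S Finset.univ ϖ ν R1 (p j)
  have E2 : -μ = ∑ k, (m k : ℂ) • ν k := by
    refine Rel.unique S (rel_self S hVμ.1 hvμ hselfdual) ?_
    conv_lhs => rw [hμexp]
    exact Rel.sum S Finset.univ ϖ ν R1 m
  have hev : Even (∑ j, m j * n j) := by
    refine comb p ?_ n m ?_ ?_ ?_
    · intro j l
      have := LinearMap.congr_fun (E1 j) (hc l)
      simp only [LinearMap.neg_apply, hϖ, LinearMap.sum_apply, LinearMap.smul_apply, hp,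
        smul_eq_mul, mul_neg, Finset.sum_neg_distrib, neg_inj] at this
      have h2 : ((∑ k, p j k * p k l : ℕ) : ℂ) = ((if j = l then 1 else 0 : ℕ) : ℂ) := by
        push_cast; exact this.symm
      exact Nat.cast_injective h2
    · intro j
      have := LinearMap.congr_fun (hexp j) ⟨h, S.hH⟩
      simp only [LinearMap.neg_apply, LinearMap.sum_apply, LinearMap.smul_apply, hνh, hn,
        smul_eq_mul, neg_neg] at this
      exact_mod_cast this
    · intro k
      have := LinearMap.congr_fun E2 (hc k)
      simp only [LinearMap.neg_apply, LinearMap.sum_apply, LinearMap.smul_apply, hp, hm,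
        smul_eq_mul, mul_neg, Finset.sum_neg_distrib, neg_inj] at this
      exact_mod_cast this
    · intro j hj
      have h1 : ν j = -ϖ j := by
        have := hexp j
        simp only [hj] at this
        rw [← neg_neg (ν j), this]
        simp
      have h2 := hvanish j (self_dual S (hF j).1 (hv j) (hn j) (h1 ▸ hν j))
      rw [hm] at h2
      exact_mod_cast h2
  refine even_case S hVμ.1 hvμ ?_ hev hselfdual
  conv_lhs => rw [hμexp]
  simp [LinearMap.sum_apply, hn]

lemma main_zero [FiniteDimensional ℂ L] [LieAlgebra.IsKilling ℂ L]
    (H : LieSubalgebra ℂ L) [H.IsCartanSubalgebra]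
    (α : Fin 0 → Module.Dual ℂ H) (hbase : IsBase H α)
    (μ : Module.Dual ℂ H) (V : Type) [AddCommGroup V] [Module ℂ V] [LieRingModule L V]
    [LieModule ℂ L V] (hV : IsHWIrrep H α μ V)
    (hselfdual : IsDualPair (L := L) V V) :
    IsOrthogonalRep (L := L) V ∧ ¬ IsSymplecticRep (L := L) V := by
  have hd : ∀ χ : Module.Dual ℂ H, χ = 0 := by
    intro χ
    have h1 : χ ∈ Submodule.span ℂ (Set.range α) := by rw [dual_span hbase]; trivial
    rw [Set.range_eq_empty, Submodule.span_empty] at h1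
    simpa using h1
  have hH : ∀ x ∈ H, x = 0 := by
    intro x hx
    have := (Module.forall_dual_apply_eq_zero_iff ℂ (⟨x, hx⟩ : H)).1 (fun χ => by rw [hd χ]; rfl)
    exact congrArg Subtype.val this
  have hL : ∀ x : L, x = 0 := by
    intro x
    have hP : PosSet H α = ∅ := Set.eq_empty_of_forall_notMem fun y ⟨χ, hχ, _⟩ => hχ.1.1 (hd χ)
    have hN : NegSet H α = ∅ := Set.eq_empty_of_forall_notMem fun y ⟨χ, hχ, _⟩ => hχ.1.1 (hd χ)
    have h1 := top_decomp hbase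
    rw [hP, hN, Submodule.span_empty, bot_sup_eq, sup_bot_eq] at h1
    refine hH x ?_
    change x ∈ H.toSubmodule
    rw [h1]; trivial
  obtain ⟨hs, v, hv, -, -⟩ := hV
  let D : LieSubmodule ℂ L V :=
    { Submodule.span ℂ {v} with
      lie_mem := fun {x m} _ => by
        rw [hL x, zero_lie]
        exact Submodule.zero_mem _ }
  have hD : ∀ w : V, ∃ a : ℂ, a • v = w := by
    intro w
    have h1 : LieSubmodule.lieSpan ℂ L {v} ≤ D := by
      rw [LieSubmodule.lieSpan_le]
      exact Set.singleton_subset_iff.2 (Submodule.mem_span_singleton_self v)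
    exact Submodule.mem_span_singleton.1 (h1 (gen_top hs hv w))
  constructor
  · obtain ⟨B, h1, -, hB⟩ := hselfdual
    refine ⟨B, fun a b => ?_, h1, hB⟩
    obtain ⟨a, rfl⟩ := hD a
    obtain ⟨b, rfl⟩ := hD b
    simp only [map_smul, LinearMap.smul_apply, smul_eq_mul]
    ring
  · rintro ⟨B, h1, h2, -⟩
    refine hv (h2 v fun w => ?_)
    obtain ⟨b, rfl⟩ := hD w
    rw [map_smul, h1, smul_zero]

/-- If `μ = μ̄` (witnessed by a perfect invariant self-pairing of `V_μ`)
and `⟨μ, α_j∨⟩ = 0` for every index `j` whose fundamental weight is self-dual (i.e. whose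
fundamental representation `F j` is self-dual), then `V_μ` is orthogonal, and in
particular not symplectic. -/
theorem statement10
    {L : Type} [LieRing L] [LieAlgebra ℂ L] [FiniteDimensional ℂ L]
    [LieAlgebra.IsSemisimple ℂ L]
    (H : LieSubalgebra ℂ L) [H.IsCartanSubalgebra]
    {r : ℕ} (α : Fin r → Module.Dual ℂ H) (hc : Fin r → H)
    (hbase : IsBase H α) (hcoroot : ∀ j, IsCoroot H (α j) (hc j))
    (ϖ : Fin r → Module.Dual ℂ H)
    (hϖ : ∀ j k, ϖ j (hc k) = if j = k then (1 : ℂ) else 0)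
    (F : Fin r → Type) [∀ j, AddCommGroup (F j)] [∀ j, Module ℂ (F j)]
    [∀ j, LieRingModule L (F j)] [∀ j, LieModule ℂ L (F j)] [∀ j, FiniteDimensional ℂ (F j)]
    (hF : ∀ j, IsHWIrrep H α (ϖ j) (F j))
    (μ : Module.Dual ℂ H) (hμ : IsDomInt hc μ)
    (Vμ : Type) [AddCommGroup Vμ] [Module ℂ Vμ] [LieRingModule L Vμ]
    [LieModule ℂ L Vμ] [FiniteDimensional ℂ Vμ]
    (hVμ : IsHWIrrep H α μ Vμ)
    (hselfdual : IsDualPair (L := L) Vμ Vμ)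
    (hvanish : ∀ j, IsDualPair (L := L) (F j) (F j) → μ (hc j) = 0) :
    IsOrthogonalRep (L := L) Vμ ∧ ¬ IsSymplecticRep (L := L) Vμ := by
  have : LieAlgebra.IsKilling ℂ L := inferInstance
  cases r with
  | zero => exact main_zero H α hbase μ Vμ hVμ hselfdual
  | succ r =>
    exact main_pos H 0 α hc hbase hcoroot ϖ hϖ F hF μ hμ Vμ hVμ hselfdual hvanish

end AdjPaper
end

section
/- Let Φ be a reduced crystallographic root system with base Δ = {α_1, …, α_r}, positive roots Φ⁺, and Weyl vector ρ = (1/2)Σ_{α ∈ Φ⁺} α. Let μ be a dominant weight, let γ ∈ Φ, and suppose α_j ∈ Δ satisfies ⟨ρ + μ + γ, α_j∨⟩ < 0; set p := −⟨ρ + μ + γ, α_j∨⟩. Then the reflected weight s_{α_j}(ρ + μ + γ) = ρ + μ + γ + p·α_j is dominant, i.e. ⟨ρ + μ + γ + p·α_j, α_k∨⟩ ≥ 0 for every α_k ∈ Δ. -/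
open scoped Classical RealInnerProductSpace

namespace RootPaper

variable {E : Type} [NormedAddCommGroup E] [InnerProductSpace ℝ E] [FiniteDimensional ℝ E]

/-- The Cartan pairing `⟨β, α∨⟩ = 2⟨β, α⟩/⟨α, α⟩`. -/
noncomputable def cpair (β α : E) : ℝ := 2 * ⟪β, α⟫ / ⟪α, α⟫

/-- `Φ` is a reduced crystallographic root system in the real inner product space `E`. -/
structure IsRootSystem (Φ : Finset E) : Prop where
  nonzero : ∀ α ∈ Φ, α ≠ 0
  span : Submodule.span ℝ (Φ : Set E) = ⊤
  reduced : ∀ α ∈ Φ, ∀ t : ℝ, t • α ∈ Φ → t = 1 ∨ t = -1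
  reflection_mem : ∀ α ∈ Φ, ∀ β ∈ Φ, β - cpair β α • α ∈ Φ
  crystallographic : ∀ α ∈ Φ, ∀ β ∈ Φ, ∃ n : ℤ, cpair β α = (n : ℝ)

/-- `Δ` is a base (set of simple roots) of the root system `Φ`: a linearly independent
subset such that every root is a non-negative or non-positive integral combination of
elements of `Δ`. -/
structure IsBase (Φ Δ : Finset E) : Prop where
  subset : (Δ : Set E) ⊆ (Φ : Set E)
  indep : LinearIndependent ℝ (fun a : {x : E // x ∈ Δ} => (a : E))
  pos_neg : ∀ β ∈ Φ, (∃ c : E → ℕ, β = ∑ a ∈ Δ, (c a : ℝ) • a) ∨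
    (∃ c : E → ℕ, β = -∑ a ∈ Δ, (c a : ℝ) • a)

/-- The positive roots of `Φ` relative to the base `Δ`. -/
noncomputable def posRoots (Φ Δ : Finset E) : Finset E :=
  Φ.filter fun β => ∃ c : E → ℕ, β = ∑ a ∈ Δ, (c a : ℝ) • a

/-- The Weyl vector `ρ`, half the sum of the positive roots. -/
noncomputable def weylVector (Φ Δ : Finset E) : E := (2⁻¹ : ℝ) • ∑ β ∈ posRoots Φ Δ, β

set_option linter.unusedSectionVars false

theorem cpair_add' (x y a : E) : cpair (x + y) a = cpair x a + cpair y a := by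
  unfold cpair; rw [inner_add_left]; ring

theorem cpair_smul' (t : ℝ) (x a : E) : cpair (t • x) a = t * cpair x a := by
  unfold cpair; rw [real_inner_smul_left]; ring

theorem cpair_sum' (s : Finset E) (a : E) : cpair (∑ x ∈ s, x) a = ∑ x ∈ s, cpair x a := by
  unfold cpair; rw [sum_inner, Finset.mul_sum, Finset.sum_div]

theorem cpair_self' {a : E} (ha : a ≠ 0) : cpair a a = 2 := by
  unfold cpair
  have : ⟪a, a⟫ ≠ 0 := inner_self_ne_zero.mpr ha
  field_simp

theorem cpair_mul' {a : E} (ha : a ≠ 0) (x : E) : cpair x a * ⟪a, a⟫ = 2 * ⟪x, a⟫ := by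
  unfold cpair
  have : ⟪a, a⟫ ≠ 0 := inner_self_ne_zero.mpr ha
  field_simp

/-- Strict Cauchy-Schwarz for non-proportional roots. -/
theorem pair_lt_four {Φ : Finset E} (hΦ : IsRootSystem Φ) {x y : E} (hx : x ∈ Φ) (hy : y ∈ Φ)
    (h1 : x ≠ y) (h2 : x ≠ -y) : cpair x y * cpair y x < 4 := by
  have hx0 := hΦ.nonzero x hx
  have hy0 := hΦ.nonzero y hy
  have px : 0 < ⟪x, x⟫ := real_inner_self_pos.mpr hx0
  have py : 0 < ⟪y, y⟫ := real_inner_self_pos.mpr hy0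
  have hz : x - (⟪x, y⟫ / ⟪y, y⟫) • y ≠ 0 := by
    intro h
    have h' : x = (⟪x, y⟫ / ⟪y, y⟫) • y := sub_eq_zero.mp h
    rcases hΦ.reduced y hy (⟪x, y⟫ / ⟪y, y⟫) (h' ▸ hx) with h3 | h3
    · rw [h3, one_smul] at h'; exact h1 h'
    · rw [h3, neg_one_smul] at h'; exact h2 h'
  have pz := real_inner_self_pos.mpr hz
  have e : ⟪x - (⟪x, y⟫ / ⟪y, y⟫) • y, x - (⟪x, y⟫ / ⟪y, y⟫) • y⟫ * ⟪y, y⟫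
      = ⟪x, x⟫ * ⟪y, y⟫ - ⟪x, y⟫ * ⟪x, y⟫ := by
    rw [inner_sub_left, inner_sub_right, inner_sub_right, real_inner_smul_left,
      real_inner_smul_left, real_inner_smul_right, real_inner_smul_right, real_inner_comm x y]
    field_simp
    ring
  have pos := mul_pos pz py
  rw [e] at pos
  unfold cpair
  rw [real_inner_comm x y, div_mul_div_comm, div_lt_iff₀ (mul_pos py px)]
  nlinarith

theorem coeff_sign {Φ Δ : Finset E} (hΔ : IsBase Φ Δ) (f : E → ℝ)
    (h : ∑ a ∈ Δ, f a • a ∈ Φ) : (∀ a ∈ Δ, ∃ n : ℕ, f a = n) ∨ (∀ a ∈ Δ, f a ≤ 0) := by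
  have key : ∀ g : E → ℝ, ∑ a ∈ Δ, f a • a = ∑ a ∈ Δ, g a • a → ∀ a ∈ Δ, f a = g a := by
    intro g hg a ha
    have li := hΔ.indep
    rw [Fintype.linearIndependent_iff] at li
    have h0 : ∑ a ∈ Δ, (f a - g a) • a = 0 := by
      simp only [sub_smul, Finset.sum_sub_distrib, hg, sub_self]
    have h1 : ∑ i : {x : E // x ∈ Δ}, (f i - g i) • (i : E) = 0 := by
      rw [← h0]
      exact Finset.sum_coe_sort Δ (fun a => (f a - g a) • a)
    have := li (fun i => f i - g i) h1 ⟨a, ha⟩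
    simp only at this
    linarith
  rcases hΔ.pos_neg _ h with ⟨c, hc⟩ | ⟨c, hc⟩
  · left
    intro a ha
    exact ⟨c a, key (fun a => (c a : ℝ)) hc a ha⟩
  · right
    intro a ha
    have := key (fun a => -(c a : ℝ)) (by simpa [neg_smul] using hc) a ha
    rw [this]
    simp

theorem mixed_false {Φ Δ : Finset E} (hΔ : IsBase Φ Δ) {a b : E} (ha : a ∈ Δ) (hb : b ∈ Δ)
    (hab : a ≠ b) {s : ℝ} (hs : s < 0) {t : ℝ} (ht : 0 < t) (h : s • a + t • b ∈ Φ) : False := by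
  have e : ∑ x ∈ Δ, ((if x = a then s else 0) + (if x = b then t else 0)) • x
      = s • a + t • b := by
    simp [add_smul, Finset.sum_add_distrib, ite_smul, ha, hb]
  rw [← e] at h
  rcases coeff_sign hΔ _ h with h1 | h1
  · obtain ⟨n, hn⟩ := h1 a ha
    simp [hab] at hn
    have : (0 : ℝ) ≤ n := Nat.cast_nonneg n
    linarith
  · have := h1 b hb
    simp [hab.symm] at this
    linarith

theorem base_obtuse {Φ Δ : Finset E} (hΦ : IsRootSystem Φ) (hΔ : IsBase Φ Δ) {a b : E}
    (ha : a ∈ Δ) (hb : b ∈ Δ) (hab : a ≠ b) : cpair a b ≤ 0 := by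
  by_contra hc
  push Not at hc
  have h := hΦ.reflection_mem b (hΔ.subset hb) a (hΔ.subset ha)
  refine mixed_false hΔ hb ha hab.symm (s := -cpair a b) (by linarith) (t := 1) one_pos ?_
  convert h using 1
  rw [neg_smul, one_smul]; abel

theorem refl_pos {Φ Δ : Finset E} (hΦ : IsRootSystem Φ) (hΔ : IsBase Φ Δ) {a b : E}
    (ha : a ∈ Δ) (hb : b ∈ posRoots Φ Δ) (hab : b ≠ a) : b - cpair b a • a ∈ posRoots Φ Δ := by
  unfold posRoots at hb ⊢
  rw [Finset.mem_filter] at hb ⊢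
  obtain ⟨hbΦ, c, hc⟩ := hb
  have hr := hΦ.reflection_mem a (hΔ.subset ha) b hbΦ
  refine ⟨hr, ?_⟩
  have e : b - cpair b a • a
      = ∑ x ∈ Δ, ((c x : ℝ) + (if x = a then -cpair b a else 0)) • x := by
    simp only [add_smul, Finset.sum_add_distrib, ← hc, ite_smul, zero_smul, Finset.sum_ite_eq', ha]
    simp [sub_eq_add_neg]
  have hx : ∃ x ∈ Δ, x ≠ a ∧ c x ≠ 0 := by
    by_contra hn
    push Not at hn
    have e2 : b = (c a : ℝ) • a := by
      rw [hc]
      refine Finset.sum_eq_single a (fun x hx hxa => ?_) (fun h => absurd ha h)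
      rw [hn x hx hxa]; simp
    rcases hΦ.reduced a (hΔ.subset ha) (c a) (e2 ▸ hbΦ) with h | h
    · rw [h, one_smul] at e2; exact hab e2
    · have : (0 : ℝ) ≤ c a := Nat.cast_nonneg _
      linarith
  obtain ⟨x, hxΔ, hxa, hcx⟩ := hx
  have hr' := hr
  rw [e] at hr'
  rcases coeff_sign hΔ _ hr' with h1 | h1
  · choose! n hn using h1
    exact ⟨n, e.trans (Finset.sum_congr rfl fun x hx => by rw [hn x hx])⟩
  · have := h1 x hxΔ
    simp [hxa] at this
    exact absurd this hcx

theorem weyl_pair {Φ Δ : Finset E} (hΦ : IsRootSystem Φ) (hΔ : IsBase Φ Δ) {a : E}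
    (ha : a ∈ Δ) : cpair (weylVector Φ Δ) a = 1 := by
  have ha0 := hΦ.nonzero a (hΔ.subset ha)
  have hap : a ∈ posRoots Φ Δ := by
    unfold posRoots
    rw [Finset.mem_filter]
    refine ⟨hΔ.subset ha, fun x => if x = a then 1 else 0, ?_⟩
    simp [ite_smul, ha]
  have hs : ∀ b : E, cpair (b - cpair b a • a) a = - cpair b a := by
    intro b
    rw [sub_eq_add_neg, ← neg_smul, cpair_add', cpair_smul', cpair_self' ha0]; ring
  have hinv : ∀ b : E, (b - cpair b a • a) - cpair (b - cpair b a • a) a • a = b := by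
    intro b
    rw [hs, neg_smul]; abel
  have hmem : ∀ b ∈ (posRoots Φ Δ).erase a, b - cpair b a • a ∈ (posRoots Φ Δ).erase a := by
    intro b hb
    rw [Finset.mem_erase] at hb ⊢
    refine ⟨fun h => ?_, refl_pos hΦ hΔ ha hb.2 hb.1⟩
    have h2 := hinv b
    rw [h, cpair_self' ha0] at h2
    have h3 : b = (-1 : ℝ) • a := by rw [← h2]; module
    have h4 := hb.2
    unfold posRoots at h4
    rw [Finset.mem_filter] at h4
    obtain ⟨-, c, hc⟩ := h4
    have e' : ∑ x ∈ Δ, (-((c x : ℝ) + (if x = a then 1 else 0))) • x = 0 := by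
      simp only [neg_smul, add_smul, Finset.sum_add_distrib, ← hc, ite_smul, zero_smul,
        Finset.sum_ite_eq', ha, if_true, Finset.sum_neg_distrib]
      rw [h3]; module
    have li := hΔ.indep
    rw [Fintype.linearIndependent_iff] at li
    have h5 := li (fun i => -((c i : ℝ) + (if (i : E) = a then 1 else 0)))
      (by rw [← e']; exact Finset.sum_coe_sort Δ
            (fun x => (-((c x : ℝ) + (if x = a then 1 else 0))) • x)) ⟨a, ha⟩
    simp only [if_true] at h5
    have : (0 : ℝ) ≤ c a := Nat.cast_nonneg _
    linarith
  have hsum : ∑ b ∈ (posRoots Φ Δ).erase a, cpair b a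
      = ∑ b ∈ (posRoots Φ Δ).erase a, - cpair b a := by
    refine Finset.sum_bij' (fun b _ => b - cpair b a • a) (fun b _ => b - cpair b a • a)
      hmem hmem (fun b _ => hinv b) (fun b _ => hinv b) (fun b _ => ?_)
    rw [hs]; ring
  rw [Finset.sum_neg_distrib] at hsum
  unfold weylVector
  rw [cpair_smul', cpair_sum', ← Finset.add_sum_erase _ _ hap, cpair_self' ha0]
  have : ∑ b ∈ (posRoots Φ Δ).erase a, cpair b a = 0 := by linarith
  rw [this]; norm_num

theorem int_case {u v : ℤ} (hu : u ≤ -2) (hv : v < 0) (h : u * v < 4) :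
    v = -1 ∧ (u = -2 ∨ u = -3) := by
  have hv1 : v = -1 := by nlinarith
  subst hv1
  exact ⟨rfl, by omega⟩

/-- For roots with pairing at most `-2` which are not opposite. -/
theorem pair_case {Φ : Finset E} (hΦ : IsRootSystem Φ) {x y : E} (hx : x ∈ Φ) (hy : y ∈ Φ)
    (h2 : x ≠ -y) {u : ℤ} (hu : cpair x y = u) (hu2 : u ≤ -2) :
    cpair y x = -1 ∧ (u = -2 ∨ u = -3) ∧ ⟪x, x⟫ = -u * ⟪y, y⟫ := by
  have hx0 := hΦ.nonzero x hx
  have hy0 := hΦ.nonzero y hy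
  have px : 0 < ⟪x, x⟫ := real_inner_self_pos.mpr hx0
  have py : 0 < ⟪y, y⟫ := real_inner_self_pos.mpr hy0
  have hu2' : (u : ℝ) ≤ -2 := by exact_mod_cast hu2
  have h1 : x ≠ y := by
    rintro rfl
    rw [cpair_self' hx0] at hu
    linarith
  obtain ⟨v, hv⟩ := hΦ.crystallographic x hx y hy
  have hlt := pair_lt_four hΦ hx hy h1 h2
  have e1 := cpair_mul' hy0 x
  have e2 := cpair_mul' hx0 y
  rw [real_inner_comm x y] at e2
  rw [hu, hv] at hlt
  rw [hu] at e1
  rw [hv] at e2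
  have hv0 : (v : ℝ) < 0 := by
    by_contra hc
    push Not at hc
    nlinarith [mul_nonneg hc px.le]
  obtain ⟨a, b⟩ := int_case hu2 (by exact_mod_cast hv0) (by exact_mod_cast hlt)
  subst a
  refine ⟨by rw [hv]; norm_num, b, ?_⟩
  push_cast at e2
  linarith


/-- Let `μ` be a dominant integral weight, `γ ∈ Φ`, and suppose the
simple root `αj ∈ Δ` satisfies `⟨ρ + μ + γ, αj∨⟩ = -p < 0`.  Then the reflected weight
`s_{αj}(ρ + μ + γ) = ρ + μ + γ + p·αj` is dominant. -/
theorem statement16 {Φ Δ : Finset E} (hΦ : IsRootSystem Φ) (hΔ : IsBase Φ Δ)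
    {μ : E} (hμ : ∀ a ∈ Δ, ∃ n : ℕ, cpair μ a = (n : ℝ))
    {γ : E} (hγ : γ ∈ Φ) {αj : E} (hαj : αj ∈ Δ)
    (hneg : cpair (weylVector Φ Δ + μ + γ) αj < 0) :
    ∀ αk ∈ Δ,
      0 ≤ cpair (weylVector Φ Δ + μ + γ + (-(cpair (weylVector Φ Δ + μ + γ) αj)) • αj) αk := by
  intro αk hαk
  have hjΦ : αj ∈ Φ := hΔ.subset hαj
  have hkΦ : αk ∈ Φ := hΔ.subset hαk
  have hj0 := hΦ.nonzero _ hjΦ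
  have hk0 := hΦ.nonzero _ hkΦ
  have pj : 0 < ⟪αj, αj⟫ := real_inner_self_pos.mpr hj0
  have pk : 0 < ⟪αk, αk⟫ := real_inner_self_pos.mpr hk0
  rw [cpair_add', cpair_smul']
  by_cases hjk : αk = αj
  · subst hjk
    rw [cpair_self' hk0]; linarith
  obtain ⟨m, hm⟩ := hμ αj hαj
  obtain ⟨mk, hmk⟩ := hμ αk hαk
  obtain ⟨c, hc⟩ := hΦ.crystallographic αj hjΦ γ hγ
  have hval : cpair (weylVector Φ Δ + μ + γ) αj = 1 + m + c := by
    rw [cpair_add', cpair_add', weyl_pair hΦ hΔ hαj, hm, hc]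
  rw [hval] at hneg ⊢
  rw [cpair_add', cpair_add', weyl_pair hΦ hΔ hαk, hmk]
  have hneg' : (1 : ℤ) + m + c < 0 := by exact_mod_cast hneg
  obtain ⟨p, hp⟩ : ∃ p : ℤ, p = -(1 + m + c) := ⟨_, rfl⟩
  have hpR : -((1 : ℝ) + m + c) = p := by rw [hp]; push_cast; ring
  rw [hpR]
  have hmk0 : (0 : ℝ) ≤ mk := Nat.cast_nonneg _
  by_cases hγj : γ = -αj
  · subst hγj
    have h2 : (c : ℝ) = -2 := by
      rw [← hc, ← neg_one_smul ℝ, cpair_smul', cpair_self' hj0]; norm_num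
    have h2' : c = -2 := by exact_mod_cast h2
    have : p = 1 := by omega
    rw [this, ← neg_one_smul ℝ, cpair_smul']
    push_cast
    linarith
  obtain ⟨hjγ, hc23, hγγ⟩ := pair_case hΦ hγ hjΦ hγj hc (by omega)
  have ejγ := cpair_mul' hj0 γ
  rw [hc] at ejγ
  -- β = γ + p αj is a root
  have hr1 : γ + αj ∈ Φ := by
    have := hΦ.reflection_mem γ hγ αj hjΦ
    rw [hjγ] at this
    convert this using 1
    module
  have hpc : p = 1 ∨ (p = 2 ∧ c = -3) := by omega
  have hβ : γ + (p : ℝ) • αj ∈ Φ := by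
    rcases hpc with h | ⟨h, h'⟩
    · rw [h]; simpa using hr1
    · have := hΦ.reflection_mem αj hjΦ _ hr1
      rw [cpair_add', hc, cpair_self' hj0, h'] at this
      rw [h]
      convert this using 1
      push_cast
      module
  obtain ⟨q, hq⟩ := hΦ.crystallographic αk hkΦ _ hβ
  have hq' := hq
  rw [cpair_add', cpair_smul'] at hq'
  by_contra hcon
  push Not at hcon
  have hq2 : q ≤ -2 := by
    have : (1 : ℝ) + mk + q < 0 := by linarith
    have : (1 : ℤ) + mk + q < 0 := by exact_mod_cast this
    omega
  have hβk : γ + (p : ℝ) • αj ≠ -αk := by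
    intro h
    have h1 := hΦ.reflection_mem αj hjΦ γ hγ
    rw [hc] at h1
    have hm0 : (0 : ℝ) ≤ m := Nat.cast_nonneg _
    refine mixed_false hΔ hαk hαj hjk (s := -1) (by norm_num) (t := 1 + m) (by linarith) ?_
    convert h1 using 1
    have : γ = -αk - (p : ℝ) • αj := by rw [← h]; abel
    rw [this, ← hpR]
    module
  obtain ⟨hkβ, hq23, hββ⟩ := pair_case hΦ hβ hkΦ hβk hq hq2
  have hβnorm : ⟪γ + (p : ℝ) • αj, γ + (p : ℝ) • αj⟫ = ⟪αj, αj⟫ := by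
    rw [inner_add_left, inner_add_right, inner_add_right, real_inner_smul_left,
      real_inner_smul_left, real_inner_smul_right, real_inner_smul_right, real_inner_comm γ αj,
      hγγ]
    have e : ⟪γ, αj⟫ = c * ⟪αj, αj⟫ / 2 := by linarith
    rw [e]
    rcases hpc with h | ⟨h, h'⟩
    · rw [h]; push_cast; ring
    · rw [h, h']; push_cast; ring
  rw [hβnorm] at hββ
  -- pairings of the two simple roots
  obtain ⟨n, hn⟩ := hΦ.crystallographic αj hjΦ αk hkΦ
  have hn0 : n ≤ 0 := by
    have := base_obtuse hΦ hΔ hαk hαj hjk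
    rw [hn] at this
    exact_mod_cast this
  have hkj : αk ≠ -αj := by
    intro h
    have : ⟪αk, αk⟫ = ⟪αj, αj⟫ := by rw [h, inner_neg_neg]
    have q2 : (q : ℝ) ≤ -2 := by exact_mod_cast hq2
    rw [this] at hββ
    nlinarith
  have hlt := pair_lt_four hΦ hkΦ hjΦ hjk hkj
  have ekj := cpair_mul' hj0 αk
  have ejk := cpair_mul' hk0 αj
  rw [real_inner_comm αk αj] at ejk
  rw [hn] at ekj
  have hjk' : cpair αj αk = -n * q := by
    have : cpair αj αk * ⟪αk, αk⟫ = (-n * q) * ⟪αk, αk⟫ := by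
      rw [ejk, ← ekj, hββ]; ring
    exact mul_right_cancel₀ pk.ne' this
  rw [hn, hjk'] at hlt
  have hlt' : n * (-n * q) < 4 := by exact_mod_cast hlt
  have hn1 : n = 0 ∨ n = -1 := by
    have : -2 < n := by
      by_contra hh
      push Not at hh
      nlinarith [mul_nonneg (sub_nonneg.mpr hh) (sub_nonneg.mpr hq2)]
    omega
  -- pairing of αk with γ
  obtain ⟨r, hr⟩ := hΦ.crystallographic γ hγ αk hkΦ
  have hγ0 := hΦ.nonzero _ hγ
  have ekγ := cpair_mul' hγ0 αk
  have eγk := cpair_mul' hk0 γ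
  rw [real_inner_comm αk γ] at eγk
  rw [hr, hγγ] at ekγ
  have hrel : (-c * r : ℝ) = -p * n - 1 := by
    have h1 : cpair γ αk = q - p * (-n * q) := by rw [← hjk']; linarith
    have : (-c * r : ℝ) * ⟪αj, αj⟫ = (-p * n - 1) * ⟪αj, αj⟫ := by
      have : (-c * r : ℝ) * ⟪αj, αj⟫ = cpair γ αk * ⟪αk, αk⟫ := by
        rw [eγk, ← ekγ]; ring
      rw [this, h1, hββ]; ring
    exact mul_right_cancel₀ pj.ne' this
  have hrel' : -c * r = -p * n - 1 := by exact_mod_cast hrel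
  have hfin : n = -1 ∧ p = 1 ∧ r = 0 := by
    rcases hn1 with h | h <;> rcases hpc with h' | ⟨h', h''⟩ <;> rcases hc23 with h3 | h3 <;>
      subst h <;> subst h' <;> subst h3 <;> omega
  obtain ⟨hn', hp', hr'⟩ := hfin
  have hδ : αk + αj ∈ Φ := by
    have := hΦ.reflection_mem αj hjΦ αk hkΦ
    rw [hn, hn'] at this
    convert this using 1
    push_cast; module
  have hkj2 : 2 * ⟪αk, αj⟫ = -⟪αj, αj⟫ := by rw [← ekj, hn']; push_cast; ring
  have hδδ : ⟪αk + αj, αk + αj⟫ = ⟪αk, αk⟫ := by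
    rw [inner_add_left, inner_add_right, inner_add_right, real_inner_comm αk αj]
    linarith
  have hγk : ⟪γ, αk⟫ = 0 := by
    rw [hr'] at ekγ
    rw [real_inner_comm]
    push_cast at ekγ
    linarith
  have q2 : (q : ℝ) ≤ -2 := by exact_mod_cast hq2
  have c2 : (c : ℝ) ≤ -2 := by exact_mod_cast (by omega : c ≤ -2)
  have cq : (4 : ℝ) ≤ c * q := by nlinarith
  have hγn : 4 * ⟪αk, αk⟫ ≤ ⟪γ, γ⟫ := by rw [hγγ, hββ]; nlinarith
  have hne1 : γ ≠ αk + αj := by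
    intro h
    rw [← h] at hδδ
    linarith
  have hne2 : γ ≠ -(αk + αj) := by
    intro h
    rw [h, inner_neg_neg] at hγn
    linarith
  have hl := pair_lt_four hΦ hγ hδ hne1 hne2
  have hδ0 := hΦ.nonzero _ hδ
  have f1 : cpair γ (αk + αj) = -c * q := by
    have : cpair γ (αk + αj) * ⟪αk, αk⟫ = (-c * q) * ⟪αk, αk⟫ := by
      rw [← hδδ, cpair_mul' hδ0, inner_add_right, hγk, hδδ, zero_add, ← ejγ, hββ]; ring
    exact mul_right_cancel₀ pk.ne' this
  have f2 : cpair (αk + αj) γ = -1 := by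
    rw [cpair_add', hr, hr', hjγ]; norm_num
  rw [f1, f2] at hl
  linarith

end RootPaper
end
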